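/- arXiv:1205.1726 — 4 statements merged into one kernel-verified Lean document; each statement's English description precedes it below -/
import Mathlib

section
/- Let K be a Δ-field whose constant field K^Δ is algebraically closed, and let L|K be a finitely Δ-generated extension of Δ-fields with L^Δ = K^Δ. Then L|K is a Picard-Vessiot extension if and only if L|K is Δ-normal with respect to the pair of canonical K-Δ-morphisms τ_s, τ_t : L → L ⊗_K L given by τ_s(a) = a ⊗ 1 and τ_t(a) = 1 ⊗ a, i.e., if and only if 1 ⊗ L ⊆ τ_s(L)(L ⊗_K L)^Δ. -/
open scoped TensorProduct

/-- `S·T`: the set of finite sums `Σ sᵢ tᵢ` with `sᵢ ∈ S`, `tᵢ ∈ T`. -/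
def dotSet {R : Type*} [CommRing R] (S T : Set R) : Set R :=
  {x | ∃ (n : ℕ) (s t : Fin n → R), (∀ i, s i ∈ S) ∧ (∀ i, t i ∈ T) ∧ x = ∑ i, s i * t i}

/-- `ST`: the set of fractions `r/r'` with `r, r' ∈ S·T` and `r'` a unit of `R`. -/
def fracSet {R : Type*} [CommRing R] (S T : Set R) : Set R :=
  {x | ∃ r r', r ∈ dotSet S T ∧ r' ∈ dotSet S T ∧ IsUnit r' ∧ x * r' = r}

/-- The derivations `δ₁, …, δ_m` pairwise commute. -/
def CommutingDerivations {R : Type*} [CommRing R] {m : ℕ}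
    (δ : Fin m → Derivation ℤ R R) : Prop :=
  ∀ i j x, δ i (δ j x) = δ j (δ i x)

/-- The subfield of `Δ`-constants of a `Δ`-field. -/
def constantSubfield {K : Type*} [Field K] {m : ℕ}
    (δ : Fin m → Derivation ℤ K K) : Subfield K where
  carrier := {a | ∀ i, δ i a = 0}
  mul_mem' := by
    intro a b ha hb i
    simp [Derivation.leibniz, ha i, hb i]
  one_mem' := by intro i; simp
  add_mem' := by
    intro a b ha hb i
    simp [ha i, hb i]
  zero_mem' := by intro i; simp
  neg_mem' := by intro a ha i; simp [ha i]
  inv_mem' := by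
    intro a ha i
    rw [Derivation.leibniz_inv, ha i]
    simp

/-- `L|K` is a Picard-Vessiot extension: `L^Δ = K^Δ` and `L` is generated by a fundamental
solution matrix of an integrable linear system over `K`. -/
def IsPicardVessiot {m : ℕ} (K L : Type*) [Field K] [Field L] [Algebra K L]
    (δK : Fin m → Derivation ℤ K K) (δL : Fin m → Derivation ℤ L L) : Prop :=
  (∀ a : L, (∀ i, δL i a = 0) → a ∈ (algebraMap K L).range) ∧
  ∃ (n : ℕ) (A : Fin m → Matrix (Fin n) (Fin n) K) (Y : GL (Fin n) L),
    (∀ i j, (A j).map (fun x => δK i x) - (A i).map (fun x => δK j x)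
        = A i * A j - A j * A i) ∧
    (∀ i, ((Y : Matrix (Fin n) (Fin n) L)).map (fun x => δL i x)
        = (A i).map (algebraMap K L) * (Y : Matrix (Fin n) (Fin n) L)) ∧
    IntermediateField.adjoin K {x : L | ∃ p q, (Y : Matrix (Fin n) (Fin n) L) p q = x} = ⊤

/-- `L|K` is finitely `Δ`-generated: `L` is generated as a field over `K` by the elements
`θ(a)`, `a ∈ S`, `θ` a monomial in the derivations, for some finite `S ⊆ L`. -/
def FinitelyDeltaGenerated {m : ℕ} (K L : Type*) [Field K] [Field L] [Algebra K L]
    (δL : Fin m → Derivation ℤ L L) : Prop :=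
  ∃ S : Finset L, IntermediateField.adjoin K
    {x : L | ∃ a ∈ S, ∃ w : List (Fin m), x = w.foldr (fun i y => δL i y) a} = ⊤

universe u

/-- `L|K` is `Δ`-normal: for every commutative `K`-`Δ`-algebra `R` and every pair of
`K`-`Δ`-morphisms `τs, τt : L → R` one has `τt(L) ⊆ τs(L)R^Δ`. -/
def IsDeltaNormal {m : ℕ} (K L : Type*) [Field K] [Field L] [Algebra K L]
    (δK : Fin m → Derivation ℤ K K) (δL : Fin m → Derivation ℤ L L) : Prop :=
  ∀ (R : Type u) [CommRing R] [CharZero R] [Algebra K R]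
    (δR : Fin m → Derivation ℤ R R),
    CommutingDerivations δR →
    (∀ i a, δR i (algebraMap K R a) = algebraMap K R (δK i a)) →
    ∀ (τs τt : L →ₐ[K] R),
      (∀ i a, τs (δL i a) = δR i (τs a)) →
      (∀ i a, τt (δL i a) = δR i (τt a)) →
      ∀ b : L, τt b ∈ fracSet (Set.range ⇑τs) {a : R | ∀ i, δR i a = 0}

/-- The normality condition in the definition of strongly normal extensions: for every
`Δ`-field extension `M` of `K` and every pair of `K`-`Δ`-embeddings `τs, τt : L → M`
one has `τt(L) ⊆ τs(L)M^Δ` (field compositum inside `M`). -/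
def StronglyNormalCond {m : ℕ} (K L : Type*) [Field K] [Field L] [Algebra K L]
    (δK : Fin m → Derivation ℤ K K) (δL : Fin m → Derivation ℤ L L) : Prop :=
  ∀ (M : Type u) [Field M] [CharZero M] [Algebra K M]
    (δM : Fin m → Derivation ℤ M M),
    CommutingDerivations δM →
    (∀ i a, δM i (algebraMap K M a) = algebraMap K M (δK i a)) →
    ∀ (τs τt : L →ₐ[K] M),
      (∀ i a, τs (δL i a) = δM i (τs a)) →
      (∀ i a, τt (δL i a) = δM i (τt a)) →
      ∀ b : L, τt b ∈ fracSet (Set.range ⇑τs) {a : M | ∀ i, δM i a = 0}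

/-!
Write `T = L ⊗_K L` and `M = L·T^Δ`. If `Y` is a fundamental matrix generating `L`, then `Y ⊗ 1`
and `1 ⊗ Y` solve the same linear system over `T`, so they differ by a constant matrix and the
entries of `1 ⊗ Y` lie in `M`.

Conversely, contracting a constant of `T` with all linear forms on the left factor yields a
finite-dimensional `Δ`-stable subspace of the right factor. Contracting numerator and denominator
of `1 ⊗ b` therefore exhibits `b` as a quotient of `Δ`-finite elements, and `L` is generated by a
finite-dimensional `Δ`-stable subspace. A basis `w` of it solves a linear system over `K`. The
denominators in `M` common to the entries of `1 ⊗ w` form a `Δ`-stable module, hence are spanned by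
constants `c`, and the coordinates of `c (1 ⊗ w)` along constants are solutions in `L^n`. These span
`L^n` because the entries of `1 ⊗ w` are linearly independent over `L`. So there is a fundamental
matrix `Y` over `L`, and `w` is a combination of its columns with coefficients in `L^Δ = K^Δ`.
-/

section DeltaModule

variable {ι R V F : Type*} [CommRing R] [AddCommGroup V] [Module R V]
  [FunLike F V V] [AddMonoidHomClass F V V] {δ : ι → Derivation ℤ R R} {D : ι → F}

/-- The horizontal vectors of a family of additive operators: the elements killed by all of them.
For the derivations of a `Δ`-ring `R` this is the set `R^Δ` of constants. -/
def horizontal (D : ι → F) : Set V :=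
  {v | ∀ i, D i v = 0}

/-- The vector `x`, with entries in a `Δ`-module, solves the linear differential system
`δᵢ x = Aᵢ x`. -/
def IsSolution {n : Type*} [Fintype n] (D : ι → F) (A : ι → Matrix n n R) (x : n → V) : Prop :=
  ∀ i k, D i (x k) = ∑ l, A i k l • x l

theorem map_linearCombination_of_horizontal
    (hD : ∀ i (a : R) v, D i (a • v) = δ i a • v + a • D i v) {κ : Type*} {e : κ → V}
    (he : ∀ α, e α ∈ horizontal D) (i : ι) (c : κ →₀ R) :
    D i (Finsupp.linearCombination R e c) =
      Finsupp.linearCombination R e (c.mapRange (δ i) (map_zero _)) := by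
  induction c using Finsupp.induction_linear with
  | zero => simp only [map_zero, Finsupp.mapRange_zero]
  | add c c' hc hc' => simp only [map_add, hc, hc', Finsupp.mapRange_add (map_add (δ i))]
  | single α a =>
    rw [Finsupp.mapRange_single, Finsupp.linearCombination_single, Finsupp.linearCombination_single,
      hD, he α i, smul_zero, add_zero]

theorem map_mem_span_horizontal
    (hD : ∀ i (a : R) v, D i (a • v) = δ i a • v + a • D i v) (i : ι) {v : V}
    (hv : v ∈ Submodule.span R (horizontal D)) : D i v ∈ Submodule.span R (horizontal D) := by
  induction hv using Submodule.span_induction with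
  | mem v hv => rw [hv i]; exact zero_mem _
  | zero => rw [map_zero]; exact zero_mem _
  | add v w _ _ hv hw => rw [map_add]; exact add_mem hv hw
  | smul a v hv' hv =>
    rw [hD]
    exact add_mem (Submodule.smul_mem _ _ hv') (Submodule.smul_mem _ _ hv)

theorem sub_linearCombination_mem_horizontal
    (hD : ∀ i (a : R) v, D i (a • v) = δ i a • v + a • D i v) {N : Submodule R V}
    (hN : ∀ i, ∀ v ∈ N, D i v ∈ N) {κ : Type*} {e : κ → V} (he : ∀ α, e α ∈ horizontal D)
    (hindep : LinearIndependent R (N.mkQ ∘ e)) {d : V} (hd : d ∈ horizontal D) {c : κ →₀ R}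
    (hdc : d - Finsupp.linearCombination R e c ∈ N) :
    d - Finsupp.linearCombination R e c ∈ horizontal D := by
  intro i
  have hDi : D i (d - Finsupp.linearCombination R e c) =
      -Finsupp.linearCombination R e (c.mapRange (δ i) (map_zero _)) := by
    rw [map_sub, hd i, map_linearCombination_of_horizontal hD he, zero_sub]
  have hmem : Finsupp.linearCombination R e (c.mapRange (δ i) (map_zero _)) ∈ N := by
    simpa only [hDi, neg_mem_iff] using hN i _ hdc
  have hconst : c.mapRange (δ i) (map_zero _) = 0 := by
    refine linearIndependent_iff.1 hindep _ ?_
    rw [← Finsupp.apply_linearCombination, ← LinearMap.mem_ker, N.ker_mkQ]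
    exact hmem
  rw [hDi, hconst, map_zero, neg_zero]

end DeltaModule

section DeltaVectorSpace

variable {ι L V F : Type*} [Field L] [AddCommGroup V] [Module L V]
  [FunLike F V V] [AddMonoidHomClass F V V] {δ : ι → Derivation ℤ L L} {D : ι → F}

-- Choose horizontal vectors forming a basis of the span of `V^Δ` modulo `N`. Expanding a horizontal
-- vector in this basis leaves a remainder in `N` which is again horizontal.
theorem le_span_inter_horizontal_of_stable
    (hD : ∀ i (a : L) v, D i (a • v) = δ i a • v + a • D i v) {N : Submodule L V}
    (hN : ∀ i, ∀ v ∈ N, D i v ∈ N) (hNspan : N ≤ Submodule.span L (horizontal D)) :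
    N ≤ Submodule.span L (N ∩ horizontal D) := by
  obtain ⟨κ, a, -, hspan, hindep⟩ :=
    exists_linearIndependent' L (fun v : horizontal D => N.mkQ (v : V))
  let e : κ → V := fun α => a α
  replace hindep : LinearIndependent L (N.mkQ ∘ e) := hindep
  have hhorizontal : horizontal D ⊆
      ↑(Submodule.span L (N ∩ horizontal D) ⊔ Submodule.span L (Set.range e)) := by
    intro d hd
    obtain ⟨c, hc⟩ : ∃ c, d - Finsupp.linearCombination L e c ∈ N := by
      have hmk : N.mkQ d ∈ Submodule.span L (Set.range (N.mkQ ∘ e)) :=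
        hspan.ge (Submodule.subset_span ⟨⟨d, hd⟩, rfl⟩)
      obtain ⟨c, hc⟩ := Finsupp.mem_span_range_iff_exists_finsupp.1 hmk
      refine ⟨c, (Submodule.Quotient.eq N).1 ?_⟩
      exact hc.symm.trans (Finsupp.apply_linearCombination L N.mkQ e c).symm
    have hdc := sub_linearCombination_mem_horizontal hD hN (fun α => (a α).2) hindep hd hc
    rw [← sub_add_cancel d (Finsupp.linearCombination L e c)]
    exact Submodule.add_mem_sup (Submodule.subset_span ⟨hc, hdc⟩)
      (Finsupp.mem_span_range_iff_exists_finsupp.2 ⟨c, rfl⟩)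
  intro x hx
  obtain ⟨y, hy, u, hu, rfl⟩ := Submodule.mem_sup.1 (Submodule.span_le.2 hhorizontal (hNspan hx))
  obtain ⟨c, rfl⟩ := Finsupp.mem_span_range_iff_exists_finsupp.1 hu
  have hyN : y ∈ N := Submodule.span_le.2 Set.inter_subset_left hy
  have hc : Finsupp.linearCombination L (N.mkQ ∘ e) c = 0 := by
    rw [← Finsupp.apply_linearCombination, ← LinearMap.mem_ker, N.ker_mkQ]
    exact (N.add_mem_iff_right hyN).1 hx
  change y + Finsupp.linearCombination L e c ∈ _
  rw [linearIndependent_iff.1 hindep c hc, map_zero, add_zero]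
  exact hy

-- The coordinates of `x` with respect to a basis of the span consisting of horizontal vectors are
-- themselves solutions, with entries in `L`.
theorem sum_smul_eq_zero_of_forall_isSolution {n : Type*} [Fintype n]
    (hD : ∀ i (a : L) v, D i (a • v) = δ i a • v + a • D i v) {A : ι → Matrix n n L}
    {x : n → V} (hx : IsSolution D A x) (hxspan : ∀ k, x k ∈ Submodule.span L (horizontal D))
    {lam : n → L} (hlam : ∀ y : n → L, IsSolution δ A y → ∑ k, lam k * y k = 0) :
    ∑ k, lam k • x k = 0 := by
  obtain ⟨κ, a, -, hspan, hindep⟩ := exists_linearIndependent' L ((↑) : horizontal D → V)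
  let e : κ → V := fun α => a α
  have he (α : κ) : e α ∈ horizontal D := (a α).2
  replace hindep : LinearIndependent L e := hindep
  rw [Subtype.range_coe] at hspan
  choose c hc using fun k => Finsupp.mem_span_range_iff_exists_finsupp.1 (hspan ▸ hxspan k)
  replace hc (k : n) : Finsupp.linearCombination L e (c k) = x k := hc k
  have hcoord (α : κ) : IsSolution δ A (fun k => c k α) := by
    intro i k
    have hcomb : (c k).mapRange (δ i) (map_zero _) = ∑ l, A i k l • c l := by
      apply hindep
      rw [← map_linearCombination_of_horizontal hD he i (c k), hc, hx i k]
      simp only [map_sum, map_smul, hc]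
    simpa using DFunLike.congr_fun hcomb α
  have hzero : ∑ k, lam k • c k = 0 := by
    ext α
    simpa using hlam _ (hcoord α)
  simp only [← hc, ← map_smul, ← map_sum, hzero, map_zero]

theorem exists_generalLinear_of_span_isSolution_eq_top {n : Type*} [Fintype n] [DecidableEq n]
    {A : ι → Matrix n n L} (h : Submodule.span L {y : n → L | IsSolution δ A y} = ⊤) :
    ∃ Y : GL n L, ∀ j, IsSolution δ A (fun k => Y k j) := by
  let b := Module.Basis.ofSpan h.ge
  let b' := b.reindex (b.indexEquiv (Pi.basisFun L n))
  have hunit : IsUnit (Matrix.of fun k j => b' j k) :=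
    Matrix.linearIndependent_cols_iff_isUnit.1 b'.linearIndependent
  refine ⟨hunit.unit, fun j => ?_⟩
  change IsSolution δ A (b' j)
  rw [b.reindex_apply]
  exact Module.Basis.ofSpan_subset h.ge (Set.mem_range_self _)

end DeltaVectorSpace

section ConstantsSpan

theorem derivation_smul_of_compatible {R S : Type*} [CommRing R] [CommRing S] [Algebra R S]
    {d : Derivation ℤ R R} {D : Derivation ℤ S S}
    (h : ∀ a, D (algebraMap R S a) = algebraMap R S (d a)) (a : R) (x : S) :
    D (a • x) = d a • x + a • D x := by
  rw [Algebra.smul_def, Derivation.leibniz, h, smul_eq_mul, smul_eq_mul, mul_comm x, add_comm,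
    ← Algebra.smul_def, ← Algebra.smul_def]

theorem dotSet_range_algebraMap {R S : Type*} [CommRing R] [CommRing S] [Algebra R S]
    (X : Set S) : dotSet (Set.range (algebraMap R S)) X = Submodule.span R X := by
  ext x
  rw [SetLike.mem_coe, Submodule.mem_span_set']
  constructor
  · rintro ⟨n, s, t, hs, ht, rfl⟩
    choose a ha using hs
    exact ⟨n, a, fun i => ⟨t i, ht i⟩, by simp only [Algebra.smul_def, ha]⟩
  · rintro ⟨n, a, t, rfl⟩
    exact ⟨n, fun i => algebraMap R S (a i), fun i => t i, fun i => ⟨a i, rfl⟩, fun i => (t i).2,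
      by simp only [Algebra.smul_def]⟩

variable {ι L T : Type*} [CommRing L] [CommRing T] [Algebra L T] {δT : ι → Derivation ℤ T T}

variable (L δT) in
/-- The `L`-subalgebra `L·T^Δ` of a `Δ`-algebra `T` over `L`. -/
def constantsSpan : Subalgebra L T :=
  Algebra.adjoin L (horizontal δT)

theorem horizontal_subset_constantsSpan : horizontal δT ⊆ constantsSpan L δT :=
  Algebra.subset_adjoin

theorem toSubmodule_constantsSpan :
    Subalgebra.toSubmodule (constantsSpan L δT) = Submodule.span L (horizontal δT) := by
  refine Algebra.adjoin_eq_span_of_subset L fun x hx => Submodule.subset_span ?_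
  induction hx using Submonoid.closure_induction with
  | mem _ hx => exact hx
  | one => exact fun i => (δT i).map_one_eq_zero
  | mul _ _ _ _ hx hy =>
    exact fun i => by rw [Derivation.leibniz, hx i, hy i, smul_zero, smul_zero, add_zero]

theorem mem_constantsSpan {x : T} :
    x ∈ constantsSpan L δT ↔ x ∈ Submodule.span L (horizontal δT) := by
  rw [← toSubmodule_constantsSpan, Subalgebra.mem_toSubmodule]

theorem mem_fracSet_horizontal_iff {x : T} :
    x ∈ fracSet (Set.range (algebraMap L T)) (horizontal δT) ↔
      ∃ r ∈ constantsSpan L δT, IsUnit r ∧ x * r ∈ constantsSpan L δT := by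
  simp only [fracSet, dotSet_range_algebraMap, Set.mem_ofPred_eq, SetLike.mem_coe,
    ← mem_constantsSpan]
  constructor
  · rintro ⟨r, r', hr, hr', hunit, rfl⟩
    exact ⟨r', hr', hunit, hr⟩
  · rintro ⟨r', hr', hunit, hr⟩
    exact ⟨_, r', hr, hr', hunit, rfl⟩

end ConstantsSpan

section SolutionSpace

variable {ι L T n : Type*} [Field L] [CommRing T] [Algebra L T] [Fintype n]
  {δ : ι → Derivation ℤ L L} {δT : ι → Derivation ℤ T T}

theorem mem_span_horizontal_denominators
    (hT : ∀ i a, δT i (algebraMap L T a) = algebraMap L T (δ i a)) {A : ι → Matrix n n L}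
    {z : n → T} (hz : IsSolution δT A z) {s : T} (hs : s ∈ constantsSpan L δT)
    (hsz : ∀ k, s * z k ∈ constantsSpan L δT) :
    s ∈ Submodule.span L {c | c ∈ horizontal δT ∧ ∀ k, c * z k ∈ constantsSpan L δT} := by
  have hD (i : ι) := derivation_smul_of_compatible (hT i)
  have hB (i : ι) {x : T} (hx : x ∈ constantsSpan L δT) : δT i x ∈ constantsSpan L δT := by
    rw [mem_constantsSpan] at hx ⊢
    exact map_mem_span_horizontal hD i hx
  let B := Subalgebra.toSubmodule (constantsSpan L δT)
  let N : Submodule L T := B ⊓ ⨅ k, B.comap (LinearMap.mulRight L (z k))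
  have mem_N (q : T) : q ∈ N ↔
      q ∈ constantsSpan L δT ∧ ∀ k, q * z k ∈ constantsSpan L δT := by
    simp [N, B]
  have hstable (i : ι) (q : T) (hq : q ∈ N) : δT i q ∈ N := by
    rw [mem_N] at hq ⊢
    refine ⟨hB i hq.1, fun k => ?_⟩
    have hleibniz : δT i q * z k = δT i (q * z k) - ∑ l, A i k l • (q * z l) := by
      simp only [Derivation.leibniz, hz i k, smul_eq_mul, Finset.mul_sum, mul_smul_comm]
      ring
    rw [hleibniz]
    exact sub_mem (hB i (hq.2 k)) (sum_mem fun l _ => Subalgebra.smul_mem _ (hq.2 l) _)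
  have hspan : N ≤ Submodule.span L (horizontal δT) :=
    inf_le_left.trans toSubmodule_constantsSpan.le
  refine Submodule.span_mono (fun c hc => ?_)
    (le_span_inter_horizontal_of_stable hD hstable hspan ((mem_N s).2 ⟨hs, hsz⟩))
  exact ⟨hc.2, ((mem_N c).1 hc.1).2⟩

theorem span_isSolution_eq_top
    (hT : ∀ i a, δT i (algebraMap L T a) = algebraMap L T (δ i a)) {A : ι → Matrix n n L}
    {z : n → T} (hz : IsSolution δT A z) (hindep : LinearIndependent L z) {s : T} (hunit : IsUnit s)
    (hs : s ∈ constantsSpan L δT) (hsz : ∀ k, s * z k ∈ constantsSpan L δT) :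
    Submodule.span L {y : n → L | IsSolution δ A y} = ⊤ := by
  classical
  by_contra hne
  obtain ⟨f, hf, hker⟩ := Submodule.exists_le_ker_of_lt_top _ (lt_top_iff_ne_top.2 hne)
  refine hf ((dotProductEquiv L n).symm.injective ?_)
  set lam := (dotProductEquiv L n).symm f
  have hlam_dot (y : n → L) : lam ⬝ᵥ y = f y :=
    LinearMap.congr_fun ((dotProductEquiv L n).apply_symm_apply f) y
  have hconst : ∀ c ∈ {c | c ∈ horizontal δT ∧ ∀ k, c * z k ∈ constantsSpan L δT},
      (∑ k, lam k • z k) * c = 0 := by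
    rintro c ⟨hc, hcz⟩
    have hsol : IsSolution δT A (fun k => c * z k) := fun i k => by
      simp only [Derivation.leibniz, hc i, hz i k, smul_eq_mul, mul_zero, add_zero,
        Finset.mul_sum, mul_smul_comm]
    simpa only [mul_comm _ c, Finset.mul_sum, mul_smul_comm] using
      sum_smul_eq_zero_of_forall_isSolution (fun i => derivation_smul_of_compatible (hT i)) hsol
        (fun k => mem_constantsSpan.1 (hcz k)) (lam := lam)
        fun y hy => (hlam_dot y).trans (hker (Submodule.subset_span hy))
  have hann : (∑ k, lam k • z k) * s = 0 :=
    Submodule.span_le (p := LinearMap.ker (LinearMap.mulLeft L (∑ k, lam k • z k))).2 hconst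
      (mem_span_horizontal_denominators hT hz hs hsz)
  rw [map_zero]
  exact funext (Fintype.linearIndependent_iff.1 hindep lam (hunit.mul_left_eq_zero.1 hann))

end SolutionSpace

section LinearSystems

variable {ι K L T n : Type*} [CommRing K] [CommRing L] [Algebra K L] [CommRing T] [Algebra K T]
  [Fintype n]
  {δL : ι → Derivation ℤ L L} {δT : ι → Derivation ℤ T T} {A : ι → Matrix n n K}

theorem IsSolution.map {x : n → L} (hx : IsSolution δL A x) (φ : L →ₐ[K] T)
    (hφ : ∀ i a, δT i (φ a) = φ (δL i a)) : IsSolution δT A (fun k => φ (x k)) := by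
  intro i k
  simp only [hφ, hx i k, map_sum, map_smul]

theorem isSolution_map_algebraMap_iff [Algebra L T] [IsScalarTower K L T] {x : n → T} :
    IsSolution δT (fun i => (A i).map (algebraMap K L)) x ↔ IsSolution δT A x := by
  simp only [IsSolution, Matrix.map_apply, algebraMap_smul]

theorem map_derivation_eq_mul_iff {Y : Matrix n n T} :
    (∀ i, Y.map (fun x => δT i x) = (A i).map (algebraMap K T) * Y) ↔
      ∀ j, IsSolution δT A (fun k => Y k j) := by
  simp only [← Matrix.ext_iff, Matrix.map_apply, Matrix.mul_apply, IsSolution, Algebra.smul_def]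
  exact ⟨fun h j i k => h i k j, fun h i k j => h j i k⟩

variable [DecidableEq n]

theorem mulVec_inv_mulVec {R : Type*} [CommRing R] (U : GL n R) (x : n → R) :
    (U : Matrix n n R).mulVec (((U⁻¹ : GL n R) : Matrix n n R).mulVec x) = x := by
  rw [Matrix.mulVec_mulVec, ← Units.val_mul, mul_inv_cancel, Units.val_one, Matrix.one_mulVec]

theorem inv_mulVec_mem_horizontal {U : GL n T} (hU : ∀ j, IsSolution δT A (fun k => U k j))
    {x : n → T} (hx : IsSolution δT A x) (j : n) :
    ((U⁻¹ : GL n T) : Matrix n n T).mulVec x j ∈ horizontal δT := by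
  intro i
  set v := ((U⁻¹ : GL n T) : Matrix n n T).mulVec x
  have hxv : x = (U : Matrix n n T).mulVec v := (mulVec_inv_mulVec U x).symm
  have hUv : (U : Matrix n n T).mulVec (fun j => δT i (v j)) = 0 := by
    funext k
    have hleibniz : δT i (x k) =
        (∑ l, A i k l • x l) + (U : Matrix n n T).mulVec (fun j => δT i (v j)) k := by
      simp only [hxv, Matrix.mulVec, dotProduct, map_sum, Derivation.leibniz, smul_eq_mul,
        Finset.sum_add_distrib, hU _ i k, Finset.smul_sum, Finset.mul_sum, mul_smul_comm]
      rw [add_comm, Finset.sum_comm]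
      simp only [mul_comm]
    rwa [hx i k, left_eq_add] at hleibniz
  have hv : (fun j => δT i (v j)) = 0 :=
    Matrix.mulVec_injective_of_isUnit U.isUnit (hUv.trans (Matrix.mulVec_zero _).symm)
  exact congrFun hv j

theorem integrability_of_map_derivation_eq_mul [FaithfulSMul K L] {δK : ι → Derivation ℤ K K}
    (hcompat : ∀ i a, δL i (algebraMap K L a) = algebraMap K L (δK i a)) {i j : ι}
    (hcomm : ∀ x, δL i (δL j x) = δL j (δL i x)) {Y : GL n L}
    (hY : ∀ i, (Y : Matrix n n L).map (fun x => δL i x) = (A i).map (algebraMap K L) * Y) :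
    (A j).map (fun x => δK i x) - (A i).map (fun x => δK j x) = A i * A j - A j * A i := by
  have hsecond (i j : ι) : ((Y : Matrix n n L).map (fun x => δL j x)).map (fun x => δL i x) =
      ((A j).map (fun x => δK i x) + A j * A i).map (algebraMap K L) * Y := by
    have hleibniz : ((A j).map (algebraMap K L) * (Y : Matrix n n L)).map (fun x => δL i x) =
        ((A j).map (fun x => δK i x)).map (algebraMap K L) * Y +
          (A j).map (algebraMap K L) * (Y : Matrix n n L).map (fun x => δL i x) := by
      ext p q
      simp only [Matrix.map_apply, Matrix.mul_apply, Matrix.add_apply, map_sum,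
        Derivation.leibniz, hcompat, smul_eq_mul, Finset.sum_add_distrib]
      rw [add_comm]
      simp only [mul_comm]
    rw [hY j, hleibniz, hY i, Matrix.map_add _ (map_add (algebraMap K L)), Matrix.map_mul, add_mul,
      mul_assoc]
  have hmixed : ((Y : Matrix n n L).map (fun x => δL j x)).map (fun x => δL i x) =
      ((Y : Matrix n n L).map (fun x => δL i x)).map (fun x => δL j x) := by
    ext p q
    exact hcomm _
  rw [hsecond, hsecond] at hmixed
  have hA := Matrix.map_injective (FaithfulSMul.algebraMap_injective K L)
    (Y.isUnit.mul_right_cancel hmixed)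
  rw [sub_eq_sub_iff_add_eq_add, hA, add_comm]

-- The fundamental matrices coming from the two embeddings of `L` into `T` differ by a constant
-- matrix.
theorem map_mem_constantsSpan_of_isSolution [Algebra L T] [IsScalarTower K L T]
    (hT : ∀ i a, δT i (algebraMap L T a) = algebraMap L T (δL i a)) (ψ : L →ₐ[K] T)
    (hψ : ∀ i a, δT i (ψ a) = ψ (δL i a)) {Y : GL n L}
    (hY : ∀ j, IsSolution δL A (fun k => Y k j)) (k j : n) :
    ψ (Y k j) ∈ constantsSpan L δT := by
  let U : GL n T := Matrix.GeneralLinearGroup.map (algebraMap L T) Y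
  let x : n → T := fun k => ψ (Y k j)
  have hU (j : n) : IsSolution δT A (fun k => U k j) :=
    (hY j).map (IsScalarTower.toAlgHom K L T) hT
  change x k ∈ _
  rw [← mulVec_inv_mulVec U x]
  refine sum_mem fun l _ => mul_mem (Subalgebra.algebraMap_mem _ (Y k l)) ?_
  exact horizontal_subset_constantsSpan (inv_mulVec_mem_horizontal hU ((hY j).map ψ hψ) l)

end LinearSystems

section Denominators

theorem exists_common_denominator {L T κ : Type*} [CommRing L] [CommRing T] [Algebra L T]
    [Finite κ] {B : Subalgebra L T} {x : κ → T}
    (h : ∀ k, ∃ r ∈ B, IsUnit r ∧ x k * r ∈ B) :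
    ∃ s ∈ B, IsUnit s ∧ ∀ k, s * x k ∈ B := by
  classical
  have := Fintype.ofFinite κ
  choose r hr hunit hrx using h
  refine ⟨∏ k, r k, prod_mem fun k _ => hr k, IsUnit.prod_univ_iff.2 hunit, fun k => ?_⟩
  rw [← Finset.prod_erase_mul _ _ (Finset.mem_univ k), mul_assoc, mul_comm (r k)]
  exact mul_mem (prod_mem fun l _ => hr l) (hrx k)

variable {K L T : Type*} [Field K] [Field L] [Algebra K L] [CommRing T] [Algebra K T]

/-- The field of elements of `L` whose image in `T` is a fraction with numerator in `B` and
denominator in `B ∩ Tˣ`. -/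
def fracField (φ : L →ₐ[K] T) (B : Subalgebra K T) : IntermediateField K L where
  carrier := {b | ∃ r ∈ B, IsUnit r ∧ φ b * r ∈ B}
  algebraMap_mem' k := ⟨1, one_mem B, isUnit_one, by
    rw [φ.commutes, mul_one]; exact B.algebraMap_mem k⟩
  add_mem' := by
    rintro a b ⟨r, hr, hru, hra⟩ ⟨s, hs, hsu, hsb⟩
    refine ⟨r * s, mul_mem hr hs, hru.mul hsu, ?_⟩
    have hsum : φ (a + b) * (r * s) = φ a * r * s + r * (φ b * s) := by rw [map_add]; ring
    rw [hsum]
    exact add_mem (mul_mem hra hs) (mul_mem hr hsb)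
  mul_mem' := by
    rintro a b ⟨r, hr, hru, hra⟩ ⟨s, hs, hsu, hsb⟩
    refine ⟨r * s, mul_mem hr hs, hru.mul hsu, ?_⟩
    rw [map_mul, mul_mul_mul_comm]
    exact mul_mem hra hsb
  inv_mem' := by
    rintro b ⟨r, hr, hru, hrb⟩
    rcases eq_or_ne b 0 with rfl | hb
    · exact ⟨r, hr, hru, by rwa [inv_zero]⟩
    · refine ⟨φ b * r, hrb, (hb.isUnit.map φ).mul hru, ?_⟩
      rwa [← mul_assoc, ← map_mul, inv_mul_cancel₀ hb, map_one, one_mul]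

end Denominators

theorem IsPicardVessiot.exists_isUnit_mul_mem_constantsSpan {m : ℕ} {K L T : Type*} [Field K]
    [Field L] [Algebra K L] [CommRing T] [Algebra K T] [Algebra L T] [IsScalarTower K L T]
    {δK : Fin m → Derivation ℤ K K} {δL : Fin m → Derivation ℤ L L}
    {δT : Fin m → Derivation ℤ T T} (hPV : IsPicardVessiot K L δK δL)
    (hT : ∀ i a, δT i (algebraMap L T a) = algebraMap L T (δL i a)) (ψ : L →ₐ[K] T)
    (hψ : ∀ i a, δT i (ψ a) = ψ (δL i a)) (b : L) :
    ∃ r ∈ constantsSpan L δT, IsUnit r ∧ ψ b * r ∈ constantsSpan L δT := by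
  obtain ⟨-, n, A, Y, -, hY, hgen⟩ := hPV
  let E := fracField ψ ((constantsSpan L δT).restrictScalars K)
  have hE : E = ⊤ := by
    rw [eq_top_iff, ← hgen, IntermediateField.adjoin_le_iff]
    rintro _ ⟨p, q, rfl⟩
    refine ⟨1, one_mem _, isUnit_one, ?_⟩
    rw [mul_one]
    exact map_mem_constantsSpan_of_isSolution hT ψ hψ (map_derivation_eq_mul_iff.1 hY) p q
  exact (hE.symm ▸ IntermediateField.mem_top : b ∈ E)

section DeltaFinite

variable {ι K V F : Type*} [Field K] [AddCommGroup V] [Module K V] [FunLike F V V]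

theorem exists_isSolution_basis {D : ι → F} {W : Submodule K V} [FiniteDimensional K W]
    (hDW : ∀ i, ∀ w ∈ W, D i w ∈ W) :
    ∃ (n : ℕ) (A : ι → Matrix (Fin n) (Fin n) K) (w : Fin n → V),
      IsSolution D A w ∧ LinearIndependent K w ∧ Submodule.span K (Set.range w) = W := by
  let b := Module.finBasis K W
  refine ⟨_, fun i => Matrix.of fun k l => b.repr ⟨D i (b k), hDW i _ (b k).2⟩ l, fun k => b k,
    fun i k => ?_, b.linearIndependent.map' W.subtype W.ker_subtype, ?_⟩
  · have h := congrArg W.subtype (b.sum_repr ⟨D i (b k), hDW i _ (b k).2⟩)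
    simpa only [map_sum, map_smul, Submodule.subtype_apply, Matrix.of_apply] using h.symm
  · have h := congrArg (Submodule.map W.subtype) b.span_eq
    rwa [Submodule.map_span, ← Set.range_comp, Submodule.map_top, W.range_subtype] at h

variable [AddMonoidHomClass F V V]

variable (K) in
/-- The subspace of `Δ`-finite vectors: those contained in some finite-dimensional subspace stable
under all the operators `D i`. -/
def deltaFinite (D : ι → F) : Submodule K V where
  carrier := {x | ∃ W : Submodule K V, FiniteDimensional K W ∧ (∀ i, ∀ w ∈ W, D i w ∈ W) ∧ x ∈ W}
  zero_mem' := ⟨⊥, inferInstance, by simp, zero_mem _⟩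
  add_mem' := by
    rintro x y ⟨W, hW, hDW, hx⟩ ⟨W', hW', hDW', hy⟩
    refine ⟨W ⊔ W', inferInstance, fun i w hw => ?_, Submodule.add_mem_sup hx hy⟩
    obtain ⟨a, ha, b, hb, rfl⟩ := Submodule.mem_sup.1 hw
    rw [map_add]
    exact Submodule.add_mem_sup (hDW i a ha) (hDW' i b hb)
  smul_mem' := fun a x ⟨W, hW, hDW, hx⟩ => ⟨W, hW, hDW, W.smul_mem a hx⟩

theorem exists_finiteDimensional_stable_of_forall_mem_deltaFinite {D : ι → F} {κ : Type*}
    [Finite κ] {x : κ → V} (hx : ∀ k, x k ∈ deltaFinite K D) :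
    ∃ W : Submodule K V, FiniteDimensional K W ∧ (∀ i, ∀ w ∈ W, D i w ∈ W) ∧ ∀ k, x k ∈ W := by
  choose W hfin hDW hxW using hx
  refine ⟨⨆ k, W k, inferInstance, fun i w hw => ?_, fun k => Submodule.mem_iSup_of_mem k (hxW k)⟩
  induction hw using Submodule.iSup_induction' with
  | mem k w hw => exact Submodule.mem_iSup_of_mem k (hDW k i w hw)
  | zero => rw [map_zero]; exact zero_mem _
  | add v w _ _ hv hw => rw [map_add]; exact add_mem hv hw

end DeltaFinite

section Contraction

variable {K M N : Type*} [CommRing K] [AddCommGroup M] [Module K M] [AddCommGroup N] [Module K N]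

/-- The contraction `M ⊗ N → Hom(M^*, N)`, sending `m ⊗ n` to `f ↦ f(m) n`. -/
noncomputable def contractFst : M ⊗[K] N →ₗ[K] Module.Dual K M →ₗ[K] N :=
  ((LinearMap.rTensorHom N).compr₂ (TensorProduct.lid K N).toLinearMap).flip

theorem contractFst_tmul (m : M) (n : N) (f : Module.Dual K M) :
    contractFst (m ⊗ₜ[K] n) f = f m • n :=
  rfl

variable {A B : Type*} [CommRing A] [Algebra K A] [CommRing B] [Algebra K B]

theorem contractFst_smul (a : A) (t : A ⊗[K] N) (f : Module.Dual K A) :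
    contractFst (a • t) f = contractFst t (f ∘ₗ LinearMap.mulLeft K a) := by
  induction t using TensorProduct.induction_on with
  | zero => simp only [smul_zero, map_zero, LinearMap.zero_apply]
  | add s t hs ht => simp only [smul_add, map_add, LinearMap.add_apply, hs, ht]
  | tmul m n => rfl

theorem contractFst_one_tmul_mul (b : B) (t : A ⊗[K] B) (f : Module.Dual K A) :
    contractFst (1 ⊗ₜ[K] b * t) f = b * contractFst t f := by
  induction t using TensorProduct.induction_on with
  | zero => simp only [mul_zero, map_zero, LinearMap.zero_apply]
  | add s t hs ht => simp only [mul_add, map_add, LinearMap.add_apply, hs, ht]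
  | tmul m n =>
    rw [Algebra.TensorProduct.tmul_mul_tmul, one_mul, contractFst_tmul, contractFst_tmul,
      mul_smul_comm]

/-- The derivation of the dual of a `Δ`-algebra: the one for which the evaluation pairing satisfies
the Leibniz rule. -/
def dualDerivation {δ : Derivation ℤ K K} {D : Derivation ℤ A A}
    (h : ∀ a, D (algebraMap K A a) = algebraMap K A (δ a)) (f : Module.Dual K A) :
    Module.Dual K A where
  toFun x := δ (f x) - f (D x)
  map_add' x y := by simp only [map_add]; ring
  map_smul' a x := by
    simp only [derivation_smul_of_compatible h, map_add, map_smul, smul_eq_mul, Derivation.leibniz,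
      RingHom.id_apply]
    ring

variable {ι : Type*} {δK : ι → Derivation ℤ K K} {δA : ι → Derivation ℤ A A}
  {δB : ι → Derivation ℤ B B} {δT : ι → Derivation ℤ (A ⊗[K] B) (A ⊗[K] B)}

theorem map_contractFst (hA : ∀ i a, δA i (algebraMap K A a) = algebraMap K A (δK i a))
    (hB : ∀ i a, δB i (algebraMap K B a) = algebraMap K B (δK i a))
    (hT : ∀ i a b, δT i (a ⊗ₜ[K] b) = δA i a ⊗ₜ[K] b + a ⊗ₜ[K] δB i b)
    (i : ι) (t : A ⊗[K] B) (f : Module.Dual K A) :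
    δB i (contractFst t f) =
      contractFst (δT i t) f + contractFst t (dualDerivation (hA i) f) := by
  induction t using TensorProduct.induction_on with
  | zero => simp only [map_zero, LinearMap.zero_apply, add_zero]
  | add s t hs ht => simp only [map_add, LinearMap.add_apply, hs, ht]; ring
  | tmul a b =>
    simp only [hT, map_add, LinearMap.add_apply, contractFst_tmul,
      derivation_smul_of_compatible (hB i), dualDerivation, LinearMap.coe_mk, AddHom.coe_mk]
    module

end Contraction

section ContractionOverField

variable {ι K M N A B : Type*} [Field K] [AddCommGroup M] [Module K M] [AddCommGroup N] [Module K N]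
  [CommRing A] [Algebra K A] [CommRing B] [Algebra K B] {δK : ι → Derivation ℤ K K}
  {δA : ι → Derivation ℤ A A} {δB : ι → Derivation ℤ B B}
  {δT : ι → Derivation ℤ (A ⊗[K] B) (A ⊗[K] B)}

theorem exists_contractFst_ne_zero {t : M ⊗[K] N} (ht : t ≠ 0) : ∃ f, contractFst t f ≠ 0 := by
  classical
  let b := Module.Basis.ofVectorSpace K M
  have hcoord (k) (t : M ⊗[K] N) :
      TensorProduct.equivFinsuppOfBasisLeft b t k = contractFst t (b.coord k) := by
    rw [TensorProduct.equivFinsuppOfBasisLeft_apply]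
    rfl
  by_contra! hzero
  refine ht ((TensorProduct.equivFinsuppOfBasisLeft b).injective (Finsupp.ext fun k => ?_))
  rw [hcoord, hzero, map_zero, Finsupp.zero_apply]

theorem finiteDimensional_range_contractFst (t : M ⊗[K] N) :
    FiniteDimensional K (LinearMap.range (contractFst t)) := by
  induction t using TensorProduct.induction_on with
  | zero => rw [map_zero, LinearMap.range_zero]; infer_instance
  | add s t hs ht =>
    refine Submodule.finiteDimensional_of_le (S₂ := LinearMap.range (contractFst s) ⊔
      LinearMap.range (contractFst t)) ?_
    rintro _ ⟨f, rfl⟩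
    rw [map_add]
    exact Submodule.add_mem_sup ⟨f, rfl⟩ ⟨f, rfl⟩
  | tmul m n =>
    refine Submodule.finiteDimensional_of_le (S₂ := Submodule.span K {n}) ?_
    rintro _ ⟨f, rfl⟩
    exact Submodule.smul_mem _ _ (Submodule.mem_span_singleton_self n)

theorem contractFst_mem_deltaFinite
    (hA : ∀ i a, δA i (algebraMap K A a) = algebraMap K A (δK i a))
    (hB : ∀ i a, δB i (algebraMap K B a) = algebraMap K B (δK i a))
    (hT : ∀ i a b, δT i (a ⊗ₜ[K] b) = δA i a ⊗ₜ[K] b + a ⊗ₜ[K] δB i b) {t : A ⊗[K] B}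
    (ht : t ∈ Submodule.span A (horizontal δT)) (f : Module.Dual K A) :
    contractFst t f ∈ deltaFinite K δB := by
  induction ht using Submodule.span_induction generalizing f with
  | mem d hd =>
    refine ⟨LinearMap.range (contractFst d), finiteDimensional_range_contractFst d, ?_, ⟨f, rfl⟩⟩
    rintro i _ ⟨g, rfl⟩
    rw [map_contractFst hA hB hT, hd i, map_zero, LinearMap.zero_apply, zero_add]
    exact ⟨_, rfl⟩
  | zero => rw [map_zero]; exact zero_mem _
  | add s t _ _ hs ht => rw [map_add]; exact add_mem (hs f) (ht f)
  | smul a t _ ht => rw [contractFst_smul]; exact ht _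

end ContractionOverField

section PicardVessiot

variable {ι K L : Type*} [Field K] [Field L] [Algebra K L] {δL : ι → Derivation ℤ L L}

theorem map_mem_adjoin {D : Derivation ℤ L L} {d : Derivation ℤ K K}
    (hD : ∀ a, D (algebraMap K L a) = algebraMap K L (d a)) {X : Set L}
    (hX : ∀ x ∈ X, D x ∈ IntermediateField.adjoin K X) {x : L}
    (hx : x ∈ IntermediateField.adjoin K X) : D x ∈ IntermediateField.adjoin K X := by
  induction hx using IntermediateField.adjoin_induction with
  | mem x hx => exact hX x hx
  | algebraMap a => rw [hD]; exact IntermediateField.algebraMap_mem _ _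
  | add x y _ _ hx hy => rw [map_add]; exact add_mem hx hy
  | mul x y hxX hyX hx hy =>
    rw [Derivation.leibniz]
    exact add_mem (mul_mem hxX hy) (mul_mem hyX hx)
  | inv x hxX hx =>
    rw [Derivation.leibniz_inv]
    exact mul_mem (neg_mem (pow_mem (inv_mem hxX) 2)) hx

theorem mem_adjoin_of_isSolution {n : Type*} [Fintype n] [DecidableEq n] {A : ι → Matrix n n K}
    (hconst : ∀ a : L, (∀ i, δL i a = 0) → a ∈ (algebraMap K L).range) {Y : GL n L}
    (hY : ∀ j, IsSolution δL A (fun k => Y k j)) {x : n → L} (hx : IsSolution δL A x) (k : n) :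
    x k ∈ IntermediateField.adjoin K {y : L | ∃ p q, (Y : Matrix n n L) p q = y} := by
  rw [← mulVec_inv_mulVec Y x]
  refine sum_mem fun l _ => mul_mem (IntermediateField.subset_adjoin K _ ⟨k, l, rfl⟩) ?_
  obtain ⟨a, ha⟩ := hconst _ (inv_mulVec_mem_horizontal hY hx l)
  rw [← ha]
  exact IntermediateField.algebraMap_mem _ a

theorem exists_fundamental_matrix {n T : Type*} [Fintype n] [DecidableEq n] [CommRing T]
    [Algebra K T] [Algebra L T] [IsScalarTower K L T] {δT : ι → Derivation ℤ T T}
    (hT : ∀ i a, δT i (algebraMap L T a) = algebraMap L T (δL i a)) {A : ι → Matrix n n K}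
    {z : n → T} (hz : IsSolution δT A z) (hindep : LinearIndependent L z)
    (hfrac : ∀ k, ∃ r ∈ constantsSpan L δT, IsUnit r ∧ z k * r ∈ constantsSpan L δT) :
    ∃ Y : GL n L, ∀ j, IsSolution δL A (fun k => Y k j) := by
  obtain ⟨s, hs, hunit, hsz⟩ := exists_common_denominator hfrac
  obtain ⟨Y, hY⟩ := exists_generalLinear_of_span_isSolution_eq_top
    (span_isSolution_eq_top hT (isSolution_map_algebraMap_iff.2 hz) hindep hunit hs hsz)
  exact ⟨Y, fun j => isSolution_map_algebraMap_iff.1 (hY j)⟩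

theorem FinitelyDeltaGenerated.exists_stable_adjoin_eq_top {m : ℕ}
    {δK : Fin m → Derivation ℤ K K} {δL : Fin m → Derivation ℤ L L}
    (hcompat : ∀ i a, δL i (algebraMap K L a) = algebraMap K L (δK i a))
    (hfg : FinitelyDeltaGenerated K L δL)
    (hquot : ∀ b : L, ∃ c ∈ deltaFinite K δL, c ≠ 0 ∧ b * c ∈ deltaFinite K δL) :
    ∃ W : Submodule K L, FiniteDimensional K W ∧ (∀ i, ∀ w ∈ W, δL i w ∈ W) ∧
      IntermediateField.adjoin K (W : Set L) = ⊤ := by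
  obtain ⟨S, hS⟩ := hfg
  choose c hc hc0 hbc using hquot
  obtain ⟨W, hfin, hDW, hW⟩ := exists_finiteDimensional_stable_of_forall_mem_deltaFinite
    (x := Sum.elim (fun b : S => c b) (fun b : S => b * c b))
    (Sum.rec (fun b => hc b) (fun b => hbc b))
  refine ⟨W, hfin, hDW, ?_⟩
  have hWE : (W : Set L) ⊆ IntermediateField.adjoin K (W : Set L) :=
    IntermediateField.subset_adjoin K _
  rw [eq_top_iff, ← hS, IntermediateField.adjoin_le_iff]
  rintro _ ⟨b, hb, θ, rfl⟩
  induction θ with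
  | nil =>
    rw [List.foldr_nil, ← mul_div_cancel_right₀ b (hc0 b)]
    exact div_mem (hWE (hW (Sum.inr ⟨b, hb⟩))) (hWE (hW (Sum.inl ⟨b, hb⟩)))
  | cons i θ ih => exact map_mem_adjoin (hcompat i) (fun w hw => hWE (hDW i w hw)) ih

variable {m : ℕ} {δK : Fin m → Derivation ℤ K K} {δL : Fin m → Derivation ℤ L L}

theorem isPicardVessiot_of_fundamental_matrix (hcL : CommutingDerivations δL)
    (hcompat : ∀ i a, δL i (algebraMap K L a) = algebraMap K L (δK i a))
    (hconst : ∀ a : L, (∀ i, δL i a = 0) → a ∈ (algebraMap K L).range) {n : ℕ}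
    {A : Fin m → Matrix (Fin n) (Fin n) K} {Y : GL (Fin n) L}
    (hY : ∀ j, IsSolution δL A (fun k => Y k j)) {w : Fin n → L} (hw : IsSolution δL A w)
    (hgen : IntermediateField.adjoin K (Set.range w) = ⊤) : IsPicardVessiot K L δK δL := by
  have hYA := map_derivation_eq_mul_iff.2 hY
  refine ⟨hconst, n, A, Y, fun i j => ?_, hYA, ?_⟩
  · exact integrability_of_map_derivation_eq_mul hcompat (hcL i j) hYA
  · rw [eq_top_iff, ← hgen, IntermediateField.adjoin_le_iff]
    rintro _ ⟨k, rfl⟩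
    exact mem_adjoin_of_isSolution hconst hY hw k

end PicardVessiot

section Tensor

variable {m : ℕ} {K L : Type*} [Field K] [Field L] [Algebra K L]
  {δK : Fin m → Derivation ℤ K K} {δL : Fin m → Derivation ℤ L L}
  {δT : Fin m → Derivation ℤ (L ⊗[K] L) (L ⊗[K] L)}

theorem map_tmul_one_of_leibniz_tmul
    (hδT : ∀ i a b, δT i (a ⊗ₜ[K] b) = δL i a ⊗ₜ[K] b + a ⊗ₜ[K] δL i b) (i : Fin m) (a : L) :
    δT i (a ⊗ₜ[K] 1) = δL i a ⊗ₜ[K] 1 := by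
  rw [hδT, Derivation.map_one_eq_zero, TensorProduct.tmul_zero, add_zero]

theorem map_one_tmul_of_leibniz_tmul
    (hδT : ∀ i a b, δT i (a ⊗ₜ[K] b) = δL i a ⊗ₜ[K] b + a ⊗ₜ[K] δL i b) (i : Fin m) (a : L) :
    δT i (1 ⊗ₜ[K] a) = 1 ⊗ₜ[K] δL i a := by
  rw [hδT, Derivation.map_one_eq_zero, TensorProduct.zero_tmul, zero_add]

theorem exists_deltaFinite_quotient
    (hcompat : ∀ i a, δL i (algebraMap K L a) = algebraMap K L (δK i a))
    (hδT : ∀ i a b, δT i (a ⊗ₜ[K] b) = δL i a ⊗ₜ[K] b + a ⊗ₜ[K] δL i b) {r : L ⊗[K] L}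
    (hr : r ∈ constantsSpan L δT) (hr0 : r ≠ 0) {b : L}
    (hbr : 1 ⊗ₜ[K] b * r ∈ constantsSpan L δT) :
    ∃ c ∈ deltaFinite K δL, c ≠ 0 ∧ b * c ∈ deltaFinite K δL := by
  obtain ⟨f, hf⟩ := exists_contractFst_ne_zero hr0
  refine ⟨contractFst r f, ?_, hf, ?_⟩
  · exact contractFst_mem_deltaFinite hcompat hcompat hδT (mem_constantsSpan.1 hr) f
  · rw [← contractFst_one_tmul_mul]
    exact contractFst_mem_deltaFinite hcompat hcompat hδT (mem_constantsSpan.1 hbr) f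

theorem isPicardVessiot_of_forall_exists_isUnit (hcL : CommutingDerivations δL)
    (hcompat : ∀ i a, δL i (algebraMap K L a) = algebraMap K L (δK i a))
    (hfg : FinitelyDeltaGenerated K L δL)
    (hconst : ∀ a : L, (∀ i, δL i a = 0) → a ∈ (algebraMap K L).range)
    (hδT : ∀ i a b, δT i (a ⊗ₜ[K] b) = δL i a ⊗ₜ[K] b + a ⊗ₜ[K] δL i b)
    (hfrac : ∀ b : L, ∃ r ∈ constantsSpan L δT, IsUnit r ∧
      (1 : L) ⊗ₜ[K] b * r ∈ constantsSpan L δT) :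
    IsPicardVessiot K L δK δL := by
  have hquot (b : L) : ∃ c ∈ deltaFinite K δL, c ≠ 0 ∧ b * c ∈ deltaFinite K δL := by
    obtain ⟨r, hr, hunit, hbr⟩ := hfrac b
    exact exists_deltaFinite_quotient hcompat hδT hr hunit.ne_zero hbr
  obtain ⟨W, _, hDW, hW⟩ := hfg.exists_stable_adjoin_eq_top hcompat hquot
  obtain ⟨n, A, w, hw, hindep, hspan⟩ := exists_isSolution_basis hDW
  have hz : IsSolution δT A (fun k => 1 ⊗ₜ[K] w k) :=
    hw.map (Algebra.TensorProduct.includeRight : L →ₐ[K] L ⊗[K] L)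
      (map_one_tmul_of_leibniz_tmul hδT)
  obtain ⟨Y, hY⟩ := exists_fundamental_matrix (map_tmul_one_of_leibniz_tmul hδT) hz
    (Module.Flat.linearIndependent_one_tmul hindep) fun k => hfrac (w k)
  refine isPicardVessiot_of_fundamental_matrix hcL hcompat hconst hY hw ?_
  rw [eq_top_iff, ← hW, IntermediateField.adjoin_le_iff, ← hspan]
  exact Submodule.span_le (p := Subalgebra.toSubmodule
    (IntermediateField.adjoin K (Set.range w)).toSubalgebra).2 (IntermediateField.subset_adjoin K _)

end Tensor

theorem picardVessiot_iff_deltaNormal_tensor_general {m : ℕ}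
    (K L : Type*) [Field K] [Field L] [Algebra K L]
    (δK : Fin m → Derivation ℤ K K) (δL : Fin m → Derivation ℤ L L)
    (hcL : CommutingDerivations δL)
    (hcompat : ∀ i a, δL i (algebraMap K L a) = algebraMap K L (δK i a))
    (hfg : FinitelyDeltaGenerated K L δL)
    (hnonew : ∀ a : L, (∀ i, δL i a = 0) → a ∈ (algebraMap K L).range)
    (δT : Fin m → Derivation ℤ (L ⊗[K] L) (L ⊗[K] L))
    (hδT : ∀ i (a b : L), δT i (a ⊗ₜ[K] b) = (δL i a) ⊗ₜ[K] b + a ⊗ₜ[K] (δL i b)) :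
    IsPicardVessiot K L δK δL ↔
      ∀ b : L, (1 : L) ⊗ₜ[K] b ∈
        fracSet (Set.range fun a : L => a ⊗ₜ[K] (1 : L)) {x : L ⊗[K] L | ∀ i, δT i x = 0} := by
  have hfrac (b : L) : (1 : L) ⊗ₜ[K] b ∈
        fracSet (Set.range fun a : L => a ⊗ₜ[K] (1 : L)) {x : L ⊗[K] L | ∀ i, δT i x = 0} ↔
      ∃ r ∈ constantsSpan L δT, IsUnit r ∧ (1 : L) ⊗ₜ[K] b * r ∈ constantsSpan L δT :=
    mem_fracSet_horizontal_iff
  simp only [hfrac]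
  exact ⟨fun hPV => hPV.exists_isUnit_mul_mem_constantsSpan (map_tmul_one_of_leibniz_tmul hδT)
      Algebra.TensorProduct.includeRight (map_one_tmul_of_leibniz_tmul hδT),
    isPicardVessiot_of_forall_exists_isUnit hcL hcompat hfg hnonew hδT⟩

/-- With `K^Δ` algebraically closed and `L|K` finitely `Δ`-generated with
no new constants: `L|K` is Picard-Vessiot iff `L|K` is `Δ`-normal with respect to the
canonical pair `τs, τt : L → L ⊗_K L`, `τs(a) = a ⊗ 1`, `τt(a) = 1 ⊗ a`; that is, iff
`1 ⊗ L ⊆ τs(L)·(L ⊗_K L)^Δ` (fractions with unit denominators). -/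
theorem picardVessiot_iff_deltaNormal_tensor {m : ℕ}
    (K L : Type u) [Field K] [CharZero K] [Field L] [CharZero L] [Algebra K L]
    (δK : Fin m → Derivation ℤ K K) (δL : Fin m → Derivation ℤ L L)
    (hcK : CommutingDerivations δK) (hcL : CommutingDerivations δL)
    (hcompat : ∀ i a, δL i (algebraMap K L a) = algebraMap K L (δK i a))
    (halgcl : IsAlgClosed ↥(constantSubfield δK))
    (hfg : FinitelyDeltaGenerated K L δL)
    (hnonew : ∀ a : L, (∀ i, δL i a = 0) → a ∈ (algebraMap K L).range)
    -- the (unique) `Δ`-ring structure on `L ⊗_K L`: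
    (δT : Fin m → Derivation ℤ (L ⊗[K] L) (L ⊗[K] L))
    (hδT : ∀ i (a b : L), δT i (a ⊗ₜ[K] b) = (δL i a) ⊗ₜ[K] b + a ⊗ₜ[K] (δL i b)) :
    IsPicardVessiot K L δK δL ↔
      ∀ b : L, (1 : L) ⊗ₜ[K] b ∈
        fracSet (Set.range fun a : L => a ⊗ₜ[K] (1 : L)) {x : L ⊗[K] L | ∀ i, δT i x = 0} := by
  exact picardVessiot_iff_deltaNormal_tensor_general K L δK δL hcL hcompat hfg hnonew δT hδT
end

section
/- Let K be a Δ-field whose constant field K^Δ is algebraically closed, and let L|K be a finitely Δ-generated extension of Δ-fields with L^Δ = K^Δ. Let Quot(L ⊗_K L) denote the total ring of fractions of L ⊗_K L (the localization at the multiplicative set of nonzerodivisors), with each derivation δᵢ extended (uniquely) from L ⊗_K L. Then L|K is strongly normal if and only if L|K is Δ-normal with respect to the pair of K-Δ-morphisms τ_s, τ_t : L → Quot(L ⊗_K L) given by τ_s(a) = a ⊗ 1 and τ_t(a) = 1 ⊗ a, i.e., if and only if τ_t(L) ⊆ τ_s(L)Quot(L ⊗_K L)^Δ. -/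
open scoped TensorProduct

universe u

/-!
Suppose `τt(b)` is a fraction in `Quot(L ⊗_K L)` of combinations of elements of `τs(L)` with
constant coefficients. Clearing denominators gives a linear relation over the constants between
images of elements of `L ⊗_K L`, hence the Wronskian determinants of these elements annihilate its
coefficients. If the images of the elements in a `Δ`-field `M` receiving `L ⊗_K L` were linearly
independent over `M^Δ`, some Wronskian would be nonzero in `M`, which is impossible; so there is a
relation over `M^Δ` too.

Conversely, let `L|K` be strongly normal. The ring `L ⊗_K L` is reduced, so its localizations at
minimal primes are `Δ`-fields, to which strong normality applies. Localizing at a minimal prime for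
which a transcendence basis of `1 ⊗ L` stays independent over `L ⊗ 1`, and using that `1 ⊗ L` then
lies in an extension of `L ⊗ 1` by finitely many constants, one sees that this basis is finite;
hence `L` is finitely generated as a field over `K` and `L ⊗_K L` is noetherian. Then
`Quot(L ⊗_K L)` is a finite product of `Δ`-fields, and fractions in the factors glue because the
idempotents are constants.
-/

section DeltaRings

variable {m : ℕ} {R S T : Type*} [CommRing R] [CommRing S] [CommRing T]

/-- The ring homomorphism `f` is a morphism of `Δ`-rings. -/
def IsDeltaHom (δR : Fin m → Derivation ℤ R R) (δS : Fin m → Derivation ℤ S S) (f : R →+* S) :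
    Prop :=
  ∀ i a, δS i (f a) = f (δR i a)

/-- The ring of constants `R^Δ`. -/
def deltaConstants (δ : Fin m → Derivation ℤ R R) : Subring R where
  carrier := {a | ∀ i, δ i a = 0}
  mul_mem' ha hb i := by simp [ha i, hb i]
  one_mem' i := by simp
  add_mem' ha hb i := by simp [ha i, hb i]
  zero_mem' i := by simp
  neg_mem' ha i := by simp [ha i]

/-- The iterated derivative `δ_{i₁} ⋯ δ_{iₖ} a` along the word `w = [i₁, …, iₖ]`. -/
def iterDeriv (δ : Fin m → Derivation ℤ R R) (w : List (Fin m)) (a : R) : R :=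
  w.foldr (fun i y => δ i y) a

/-- The Wronskian matrix of the family `f` with respect to the words `w`. -/
def wronskianMatrix {ι : Type*} (δ : Fin m → Derivation ℤ R R) (w : ι → List (Fin m))
    (f : ι → R) : Matrix ι ι R :=
  Matrix.of fun k j => iterDeriv δ (w k) (f j)

theorem iterDeriv_cons (δ : Fin m → Derivation ℤ R R) (i : Fin m) (w : List (Fin m)) (a : R) :
    iterDeriv δ (i :: w) a = δ i (iterDeriv δ w a) := rfl

variable {δR : Fin m → Derivation ℤ R R} {δS : Fin m → Derivation ℤ S S}
  {δT : Fin m → Derivation ℤ T T}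

theorem IsDeltaHom.comp {g : S →+* T} {f : R →+* S} (hg : IsDeltaHom δS δT g)
    (hf : IsDeltaHom δR δS f) : IsDeltaHom δR δT (g.comp f) := fun i a => by
  rw [RingHom.comp_apply, RingHom.comp_apply, hg, hf]

theorem IsDeltaHom.derivation_comm {f : R →+* S} (hf : IsDeltaHom δR δS f)
    (hR : CommutingDerivations δR) (i j : Fin m) (a : R) :
    δS i (δS j (f a)) = δS j (δS i (f a)) := by
  rw [hf, hf, hf, hf, hR]

theorem IsDeltaHom.map_iterDeriv {f : R →+* S} (hf : IsDeltaHom δR δS f) (w : List (Fin m))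
    (a : R) : f (iterDeriv δR w a) = iterDeriv δS w (f a) := by
  induction w with
  | nil => rfl
  | cons i w ih => rw [iterDeriv_cons, iterDeriv_cons, ← hf, ih]

theorem IsDeltaHom.map_wronskianMatrix {ι : Type*} {f : R →+* S} (hf : IsDeltaHom δR δS f)
    (w : ι → List (Fin m)) (a : ι → R) :
    (wronskianMatrix δR w a).map f = wronskianMatrix δS w (f ∘ a) :=
  Matrix.ext fun _ _ => hf.map_iterDeriv _ _

theorem derivation_const_mul (δ : Fin m → Derivation ℤ R R) {c : R} (hc : c ∈ deltaConstants δ)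
    (i : Fin m) (a : R) : δ i (c * a) = c * δ i a := by
  simp [hc i]

theorem iterDeriv_zero (δ : Fin m → Derivation ℤ R R) (w : List (Fin m)) :
    iterDeriv δ w 0 = 0 := by
  induction w with
  | nil => rfl
  | cons i w ih => rw [iterDeriv_cons, ih, map_zero]

theorem iterDeriv_sum_const_mul (δ : Fin m → Derivation ℤ R R) {ι : Type*} [Fintype ι]
    (c f : ι → R) (hc : ∀ j, c j ∈ deltaConstants δ) (w : List (Fin m)) :
    iterDeriv δ w (∑ j, c j * f j) = ∑ j, c j * iterDeriv δ w (f j) := by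
  induction w with
  | nil => rfl
  | cons i w ih => simp only [iterDeriv_cons, ih, map_sum, derivation_const_mul δ (hc _)]

/-- Cramer's rule for the system of all derivatives of the relation. -/
theorem wronskian_det_mul_eq_zero (δ : Fin m → Derivation ℤ R R) {ι : Type*} [Fintype ι]
    [DecidableEq ι] (w : ι → List (Fin m)) {c f : ι → R} (hc : ∀ j, c j ∈ deltaConstants δ)
    (h : ∑ j, c j * f j = 0) (j : ι) : (wronskianMatrix δ w f).det * c j = 0 := by
  have mulVec_eq_zero : (wronskianMatrix δ w f).mulVec c = 0 := by
    ext k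
    have hk := iterDeriv_sum_const_mul δ c f hc (w k)
    rw [h, iterDeriv_zero] at hk
    simp only [Matrix.mulVec, dotProduct, wronskianMatrix, Matrix.of_apply, Pi.zero_apply, hk,
      mul_comm]
  have := congrArg (fun v => (wronskianMatrix δ w f).adjugate.mulVec v j) mulVec_eq_zero
  simpa [Matrix.adjugate_mul, Matrix.smul_mulVec] using this

end DeltaRings

section Wronskian

variable {m : ℕ} {M : Type*} [Field M] (δ : Fin m → Derivation ℤ M M) {ι : Type*}

theorem exists_constant_mem_of_stable [Finite ι] (A : Submodule M (ι → M))
    (hA : ∀ c ∈ A, ∀ i, (fun j => δ i (c j)) ∈ A) (hne : A ≠ ⊥) :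
    ∃ c ∈ A, c ≠ 0 ∧ ∀ j, c j ∈ deltaConstants δ := by
  classical
  have := Fintype.ofFinite ι
  let support (c : ι → M) : Finset ι := {j | c j ≠ 0}
  obtain ⟨c, ⟨hcA, hc0⟩, hmin⟩ := WellFounded.has_min (measure fun c => (support c).card).wf
    {c | c ∈ A ∧ c ≠ 0} (A.ne_bot_iff.mp hne)
  obtain ⟨k, hk⟩ := Function.ne_iff.mp hc0
  let d : ι → M := (c k)⁻¹ • c
  have hdk : d k = 1 := inv_mul_cancel₀ hk
  refine ⟨d, A.smul_mem _ hcA, fun h => by simp [h] at hdk, fun j i => ?_⟩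
  -- `δ i d` vanishes at `k` and wherever `c` does, so its support is strictly smaller.
  have hlt : support (fun j => δ i (d j)) ⊂ support c := by
    refine (Finset.ssubset_iff_of_subset fun j hj => ?_).mpr ⟨k, ?_, ?_⟩
    · simp only [support, Finset.mem_filter_univ] at hj ⊢
      exact fun h => hj (by simp [d, h])
    · simpa [support] using hk
    · simp [support, hdk]
  by_contra hij
  exact hmin _ ⟨hA d (A.smul_mem _ hcA) i, fun h => hij (congrFun h j)⟩ (Finset.card_lt_card hlt)

/-- A relation `∑ cⱼ δ^w fⱼ = 0` holding for all words `w` may be chosen with constant `cⱼ`, because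
the space of all such `c` is stable under the derivations. -/
theorem span_iterDeriv_eq_top [Finite ι] {f : ι → M}
    (hf : LinearIndependent (deltaConstants δ) f) :
    Submodule.span M (Set.range fun w j => iterDeriv δ w (f j)) = ⊤ := by
  classical
  have := Fintype.ofFinite ι
  by_contra hne
  obtain ⟨φ, hφ0, hφ⟩ := Submodule.exists_le_ker_of_lt_top _ (lt_top_iff_ne_top.mpr hne)
  let A : Submodule M (ι → M) :=
    ⨅ w, LinearMap.ker (Fintype.linearCombination M (fun j => iterDeriv δ w (f j)))
  have mem_A (c : ι → M) : c ∈ A ↔ ∀ w, ∑ j, c j * iterDeriv δ w (f j) = 0 := by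
    simp [A, Fintype.linearCombination_apply]
  have hA : ∀ c ∈ A, ∀ i, (fun j => δ i (c j)) ∈ A := by
    simp only [mem_A]
    intro c hc i w
    have hsum : ∑ j, (c j * iterDeriv δ (i :: w) (f j) + iterDeriv δ w (f j) * δ i (c j)) = 0 := by
      simpa [iterDeriv_cons] using congrArg (δ i) (hc w)
    rw [Finset.sum_add_distrib, hc (i :: w), zero_add] at hsum
    simpa only [mul_comm] using hsum
  have hφA : (fun j => φ (Pi.single j 1)) ∈ A := (mem_A _).mpr fun w => by
    have : φ (fun j => iterDeriv δ w (f j)) = 0 := hφ (Submodule.subset_span ⟨w, rfl⟩)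
    rw [← Finset.univ_sum_single (fun j => iterDeriv δ w (f j)), map_sum] at this
    refine (Finset.sum_congr rfl fun j _ => ?_).trans this
    rw [mul_comm, ← smul_eq_mul, ← map_smul, ← Pi.single_smul, smul_eq_mul, mul_one]
  have hne : A ≠ ⊥ := A.ne_bot_iff.mpr ⟨_, hφA, fun h => hφ0 <|
    LinearMap.pi_ext' fun j => LinearMap.ext_ring (congrFun h j)⟩
  obtain ⟨c, hc, hc0, hcc⟩ := exists_constant_mem_of_stable δ A hA hne
  refine hc0 (funext fun j => ?_)
  have := Fintype.linearIndependent_iff.mp hf (fun j => ⟨c j, hcc j⟩) ((mem_A c).mp hc []) j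
  exact congrArg Subtype.val this

theorem exists_wronskian_det_ne_zero [Fintype ι] [DecidableEq ι] {f : ι → M}
    (hf : LinearIndependent (deltaConstants δ) f) :
    ∃ w : ι → List (Fin m), (wronskianMatrix δ w f).det ≠ 0 := by
  obtain ⟨κ, a, -, hspan, hli⟩ :=
    exists_linearIndependent' M fun (w : List (Fin m)) (j : ι) => iterDeriv δ w (f j)
  rw [span_iterDeriv_eq_top δ hf] at hspan
  let e := (Pi.basisFun M ι).indexEquiv (Module.Basis.mk hli hspan.ge)
  refine ⟨fun k => a (e k), ?_⟩
  have : LinearIndependent M (wronskianMatrix δ (a ∘ e) f).row := hli.comp e e.injective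
  rw [Matrix.linearIndependent_rows_iff_isUnit, Matrix.isUnit_iff_isUnit_det] at this
  exact this.ne_zero

end Wronskian

section Fractions

variable {R : Type*} [CommRing R] {S : Set R} {A : Subring R} {x : R}

theorem mem_dotSet_iff_mem_span : x ∈ dotSet S A ↔ x ∈ Submodule.span A S := by
  rw [Submodule.mem_span_set']
  constructor
  · rintro ⟨n, s, t, hs, ht, rfl⟩
    exact ⟨n, fun i => ⟨t i, ht i⟩, fun i => ⟨s i, hs i⟩,
      Finset.sum_congr rfl fun i _ => mul_comm _ _⟩
  · rintro ⟨n, c, s, rfl⟩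
    exact ⟨n, fun i => s i, fun i => c i, fun i => (s i).2, fun i => (c i).2,
      Finset.sum_congr rfl fun i _ => mul_comm _ _⟩

theorem mem_fracSet_iff : x ∈ fracSet S A ↔
    ∃ r ∈ Submodule.span A S, IsUnit r ∧ x * r ∈ Submodule.span A S := by
  simp only [fracSet, mem_dotSet_iff_mem_span, Set.mem_ofPred_eq]
  exact ⟨fun ⟨_, r, hx, hr, hu, h⟩ => ⟨r, hr, hu, h ▸ hx⟩,
    fun ⟨r, hr, hu, hx⟩ => ⟨_, r, hx, hr, hu, rfl⟩⟩

end Fractions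

section Specialization

variable {m : ℕ} {M Q T L : Type*} [Field M] [CommRing Q] [CommRing T] [Field L]
  {δM : Fin m → Derivation ℤ M M} {δQ : Fin m → Derivation ℤ Q Q} {δT : Fin m → Derivation ℤ T T}
  {δL : Fin m → Derivation ℤ L L} {φ : T →+* M} {ψ : T →+* Q}

/-- The element `θ` is a Wronskian determinant. -/
theorem exists_mul_coeff_eq_zero (hφ : IsDeltaHom δT δM φ) (hψ : IsDeltaHom δT δQ ψ) {κ : Type*}
    {f : κ → T} (hf : LinearIndependent (deltaConstants δM) (φ ∘ f)) (c : κ →₀ deltaConstants δQ)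
    (h : Finsupp.linearCombination (deltaConstants δQ) (ψ ∘ f) c = 0) :
    ∃ θ, φ θ ≠ 0 ∧ ∀ j, ψ θ * c j = 0 := by
  classical
  let f₀ : c.support → T := fun j => f j
  obtain ⟨w, hw⟩ := exists_wronskian_det_ne_zero δM (f := φ ∘ f₀)
    (hf.comp (Subtype.val : c.support → κ) Subtype.val_injective)
  refine ⟨(wronskianMatrix δT w f₀).det, ?_, fun j => ?_⟩
  · rwa [RingHom.map_det, RingHom.mapMatrix_apply, hφ.map_wronskianMatrix]
  · by_cases hj : j ∈ c.support
    · have hsum : ∑ k : c.support, (c k : Q) * (ψ ∘ f₀) k = 0 :=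
        (Finset.sum_coe_sort c.support fun k => (c k : Q) * ψ (f k)).trans h
      rw [RingHom.map_det, RingHom.mapMatrix_apply, hψ.map_wronskianMatrix]
      exact wronskian_det_mul_eq_zero δQ w (fun k => (c k).2) hsum ⟨j, hj⟩
    · rw [Finsupp.notMem_support_iff.mp hj, ZeroMemClass.coe_zero, mul_zero]

theorem IsDeltaHom.linearIndependent_comp {σ : L →+* M} (hσ : IsDeltaHom δL δM σ) {κ : Type*}
    {v : κ → L} (hv : LinearIndependent (deltaConstants δL) v) :
    LinearIndependent (deltaConstants δM) (σ ∘ v) := by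
  refine linearIndependent_iff.mpr fun c hc => ?_
  obtain ⟨θ, hθ, h⟩ := exists_mul_coeff_eq_zero (φ := RingHom.id L) (fun _ _ => rfl) hσ hv c hc
  ext j
  exact (mul_eq_zero.mp (h j)).resolve_left ((map_ne_zero σ).mpr hθ)

theorem IsDeltaHom.span_range {σ : L →+* Q} (hσ : IsDeltaHom δL δQ σ)
    {κ : Type*} {v : κ → L} (hv : Submodule.span (deltaConstants δL) (Set.range v) = ⊤) :
    Submodule.span (deltaConstants δQ) (Set.range σ) =
      Submodule.span (deltaConstants δQ) (Set.range (σ ∘ v)) := by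
  refine le_antisymm (Submodule.span_le.mpr ?_)
    (Submodule.span_mono (Set.range_comp_subset_range v σ))
  rintro _ ⟨a, rfl⟩
  have ha : a ∈ Submodule.span (deltaConstants δL) (Set.range v) := hv ▸ Submodule.mem_top
  induction ha using Submodule.span_induction with
  | mem _ h =>
    obtain ⟨j, rfl⟩ := h
    exact Submodule.subset_span ⟨j, rfl⟩
  | zero => simp
  | add _ _ _ _ iha ihb => simpa using add_mem iha ihb
  | smul c a _ iha =>
    have hc : σ c ∈ deltaConstants δQ := fun i => by rw [hσ, c.2 i, map_zero]
    have : σ (c • a) = (⟨σ c, hc⟩ : deltaConstants δQ) • σ a := map_mul σ _ _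
    exact this ▸ Submodule.smul_mem _ _ iha

theorem isField_deltaConstants (δL : Fin m → Derivation ℤ L L) : IsField (deltaConstants δL) where
  exists_pair_ne := ⟨0, 1, zero_ne_one⟩
  mul_comm := mul_comm
  mul_inv_cancel {a} ha := ⟨⟨a⁻¹, (constantSubfield δL).inv_mem a.2⟩,
    Subtype.ext (mul_inv_cancel₀ (ZeroMemClass.coe_eq_zero.not.mpr ha))⟩

theorem exists_basis_over_deltaConstants (δL : Fin m → Derivation ℤ L L) :
    ∃ s : Set L, LinearIndependent (deltaConstants δL) ((↑) : s → L) ∧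
      Submodule.span (deltaConstants δL) (Set.range ((↑) : s → L)) = ⊤ := by
  let _ : Field (deltaConstants δL) := (isField_deltaConstants δL).toField
  let B := Module.Basis.ofVectorSpace (deltaConstants δL) L
  have hB : ⇑B = (↑) := Module.Basis.coe_ofVectorSpace _ _
  exact ⟨_, hB ▸ B.linearIndependent, hB ▸ B.span_eq⟩

theorem linearIndependent_sumElim_mul {κ : Type*} {v : κ → M} {A : Subring M}
    (hv : LinearIndependent A v) {x : M}
    (hx : ∀ r ∈ Submodule.span A (Set.range v), x * r ∈ Submodule.span A (Set.range v) → r = 0) :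
    LinearIndependent A (Sum.elim (fun j => x * v j) v) := by
  let mulx : M →ₗ[A] M := LinearMap.mulLeft A x
  refine LinearIndependent.sum_type (v := mulx ∘ v) (hv.map ?_) hv ?_
  · rw [Submodule.disjoint_def]
    intro r hr (hxr : x * r = 0)
    exact hx r hr (hxr ▸ zero_mem _)
  · rw [Set.range_comp, Submodule.span_image, Submodule.disjoint_def]
    rintro _ ⟨r, hr, rfl⟩ hxr
    rw [hx r hr hxr, map_zero]

theorem map_mem_fracSet_of_map_mem_fracSet (hφ : IsDeltaHom δT δM φ) (hψ : IsDeltaHom δT δQ ψ)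
    (hker : RingHom.ker ψ ≤ RingHom.ker φ) {σ : L →+* T} (hσ : IsDeltaHom δL δT σ) {t : T}
    (ht : ψ t ∈ fracSet (Set.range (ψ.comp σ)) (deltaConstants δQ)) :
    φ t ∈ fracSet (Set.range (φ.comp σ)) (deltaConstants δM) := by
  obtain ⟨s, hs, hspan⟩ := exists_basis_over_deltaConstants δL
  rw [mem_fracSet_iff, (hψ.comp hσ).span_range hspan] at ht
  rw [mem_fracSet_iff, (hφ.comp hσ).span_range hspan]
  obtain ⟨r, hr, hr_unit, htr⟩ := ht
  obtain ⟨c, hc⟩ := Finsupp.mem_span_range_iff_exists_finsupp.mp hr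
  obtain ⟨d, hd⟩ := Finsupp.mem_span_range_iff_exists_finsupp.mp htr
  by_contra! hcon
  have hli := linearIndependent_sumElim_mul ((hφ.comp hσ).linearIndependent_comp hs)
    (x := φ t) fun r hr htr => by_contra fun h => hcon r hr (IsUnit.mk0 r h) htr
  let f : s ⊕ s → T := Sum.elim (fun j => t * σ j) (fun j => σ j)
  have hf : φ ∘ f = Sum.elim (fun j => φ t * (φ.comp σ ∘ (↑)) j) (φ.comp σ ∘ (↑)) := by
    ext (j | j) <;> simp [f]
  have hrel : Finsupp.linearCombination _ (ψ ∘ f) (c.sumElim (-d)) = 0 := by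
    have hinl : (c.sum fun j a => a • ψ (t * σ j)) = ψ t * r := by
      simp only [← hc, Finsupp.mul_sum, map_mul, mul_smul_comm, Function.comp_apply,
        RingHom.comp_apply]
    have hinr : Finsupp.linearCombination _ (fun j : s => ψ (σ j)) (-d) = -(ψ t * r) :=
      (map_neg _ _).trans (congrArg Neg.neg hd)
    rw [Finsupp.linearCombination_apply, Finsupp.sum_sumElim]
    exact (congrArg₂ _ hinl hinr).trans (add_neg_cancel _)
  obtain ⟨θ, hθ, h⟩ := exists_mul_coeff_eq_zero hφ hψ (hf ▸ hli) (c.sumElim (-d)) hrel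
  have hθr : ψ θ * r = 0 := by
    rw [← hc, Finsupp.mul_sum]
    refine Finset.sum_eq_zero fun j _ => ?_
    exact (mul_assoc _ _ _).symm.trans (mul_eq_zero_of_left (h (Sum.inl j)) _)
  exact hθ (hker ((hr_unit.mul_left_eq_zero).mp hθr))

end Specialization

section Extension

theorem derivation_eq_zero_of_formallyUnramified {A B M : Type*} [CommRing A] [CommRing B]
    [Algebra A B] [Algebra.FormallyUnramified A B] [AddCommGroup M] [Module B M]
    (D : Derivation ℤ B M) (hD : ∀ a, D (algebraMap A B a) = 0) : D = 0 := by
  let _ : Module A M := Module.compHom M (algebraMap A B)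
  have : IsScalarTower A B M := .of_algebraMap_smul fun _ _ => rfl
  let D' : Derivation A B M := Derivation.mk'
    { toFun := D
      map_add' := map_add D
      map_smul' := fun a b => by
        rw [Algebra.smul_def, Derivation.leibniz, hD, smul_zero, add_zero, algebraMap_smul,
          RingHom.id_apply] } D.leibniz
  ext b
  calc D b = D'.liftKaehlerDifferential (KaehlerDifferential.D A B b) :=
        (D'.liftKaehlerDifferential_comp_D b).symm
    _ = 0 := by rw [Subsingleton.elim (KaehlerDifferential.D A B b) 0, map_zero]

theorem exists_derivation_algebraMap_eq {A B : Type*} [CommRing A] [CommRing B] [Algebra A B]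
    [Algebra.FormallyEtale A B] (D : Derivation ℤ A A) :
    ∃ D' : Derivation ℤ B B, ∀ a, D' (algebraMap A B a) = algebraMap A B (D a) := by
  have hbc := KaehlerDifferential.isBaseChange_of_formallyEtale ℤ A B
  let ℓ := (Algebra.linearMap A B).comp D.liftKaehlerDifferential
  refine ⟨(hbc.lift ℓ).compDer (KaehlerDifferential.D ℤ B), fun a => ?_⟩
  have := hbc.lift_eq ℓ (KaehlerDifferential.D ℤ A a)
  rw [KaehlerDifferential.map_D] at this
  simpa [ℓ] using this

variable {m : ℕ} {R N : Type*} [CommRing R] [CommRing N] [Algebra R N]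
  {δR : Fin m → Derivation ℤ R R} {δN : Fin m → Derivation ℤ N N}

theorem exists_isDeltaHom_algebraMap [Algebra.FormallyEtale R N]
    (δR : Fin m → Derivation ℤ R R) :
    ∃ δN : Fin m → Derivation ℤ N N, IsDeltaHom δR δN (algebraMap R N) :=
  Classical.skolem.mp fun i => exists_derivation_algebraMap_eq (δR i)

theorem IsDeltaHom.commutingDerivations [Algebra.FormallyUnramified R N]
    (hN : IsDeltaHom δR δN (algebraMap R N)) (hR : CommutingDerivations δR) :
    CommutingDerivations δN := fun i j x => by
  have hzero : ⁅δN i, δN j⁆ = 0 := derivation_eq_zero_of_formallyUnramified (A := R) _ fun a => by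
    rw [Derivation.commutator_apply, hN.derivation_comm hR, sub_self]
  rw [← sub_eq_zero, ← Derivation.commutator_apply, hzero, Derivation.zero_apply]

end Extension

section StronglyNormal

theorem isField_localization_of_mem_minimalPrimes {R : Type*} [CommRing R] [IsReduced R]
    {p : Ideal R} [p.IsPrime] (hp : p ∈ minimalPrimes R) : IsField (Localization.AtPrime p) :=
  have := Ring.KrullDimLE.of_isLocalization p hp (Localization.AtPrime p)
  Ring.KrullDimLE.isField_of_isReduced

theorem StronglyNormalCond.algebraMap_mem_fracSet {m : ℕ} {K L R N : Type u} [Field K]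
    [CharZero K] [Field L] [Algebra K L] {δK : Fin m → Derivation ℤ K K}
    {δL : Fin m → Derivation ℤ L L} (hSN : StronglyNormalCond.{u} K L δK δL) [CommRing R]
    [Algebra K R] {δR : Fin m → Derivation ℤ R R} (hcR : CommutingDerivations δR)
    (hKR : IsDeltaHom δK δR (algebraMap K R)) {τs τt : L →ₐ[K] R}
    (hτs : IsDeltaHom δL δR (τs : L →+* R)) (hτt : IsDeltaHom δL δR (τt : L →+* R)) [CommRing N]
    (hN : IsField N) [Algebra R N] [Algebra.FormallyUnramified R N]
    {δN : Fin m → Derivation ℤ N N} (hRN : IsDeltaHom δR δN (algebraMap R N)) (b : L) :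
    algebraMap R N (τt b) ∈
      fracSet (Set.range ((algebraMap R N).comp (τs : L →+* R))) (deltaConstants δN) := by
  let _ : Field N := hN.toField
  let _ : Algebra K N := Algebra.compHom N (algebraMap K R)
  have : IsScalarTower K R N := .of_algebraMap_eq fun _ => rfl
  have : CharZero N := charZero_of_injective_algebraMap (algebraMap K N).injective
  let π : R →ₐ[K] N := IsScalarTower.toAlgHom K R N
  exact hSN N δN (hRN.commutingDerivations hcR) (hRN.comp hKR) (π.comp τs) (π.comp τt)
    (fun i a => (hRN.comp hτs i a).symm) (fun i a => (hRN.comp hτt i a).symm) b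

end StronglyNormal

section Gluing

theorem krullDimLE_zero_of_isFractionRing_self (Q : Type*) [CommRing Q] [IsNoetherianRing Q]
    [IsReduced Q] [IsFractionRing Q Q] : Ring.KrullDimLE 0 Q := .mk₀ fun q hq => by
  obtain ⟨p, hp, hqp⟩ := q.exists_le_maximal hq.ne_top
  obtain ⟨-, x, hpx⟩ := isAssociatedPrime_iff.mp hp.mem_associatedPrimes_of_isFractionRing
  have mem_p (a : Q) : a ∈ p ↔ a * x = 0 := by
    rw [hpx, Submodule.mem_colon_singleton, Submodule.mem_bot, smul_eq_mul]
  have hx : x ∉ p := fun hxp => hp.ne_top <| p.eq_top_iff_one.mpr <| by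
    rw [mem_p, one_mul, IsNilpotent.eq_zero ⟨2, (sq x).trans ((mem_p x).mp hxp)⟩]
  have hpq : p ≤ q := fun a ha =>
    (hq.mem_or_mem ((mem_p a).mp ha ▸ q.zero_mem)).resolve_right fun h => hx (hqp h)
  exact hqp.antisymm hpq ▸ hp

variable {m : ℕ} {Q ι : Type*} [CommRing Q] {N : ι → Type*} [∀ j, CommRing (N j)]
  {δQ : Fin m → Derivation ℤ Q Q} {δN : ∀ j, Fin m → Derivation ℤ (N j) (N j)}
  {ψ : ∀ j, Q →+* N j}

theorem exists_deltaConstant_map_eq_single [DecidableEq ι]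
    (hbij : Function.Bijective (RingHom.pi ψ)) (hψ : ∀ j, IsDeltaHom δQ (δN j) (ψ j)) (j : ι)
    (c : deltaConstants (δN j)) :
    ∃ c' : deltaConstants δQ, RingHom.pi ψ c' = Pi.single j (c : N j) := by
  obtain ⟨c', hc'⟩ := hbij.2 (Pi.single j (c : N j))
  refine ⟨⟨c', fun i => hbij.1 (funext fun k => ?_)⟩, hc'⟩
  have hk : ψ k c' = Pi.single j (c : N j) k := congrFun hc' k
  rw [RingHom.pi_apply, ← hψ k, hk, map_zero, Pi.zero_apply]
  obtain rfl | hkj := eq_or_ne k j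
  · rw [Pi.single_eq_same, c.2 i]
  · rw [Pi.single_eq_of_ne hkj, map_zero]

theorem exists_mem_span_map_eq_single [DecidableEq ι]
    (hbij : Function.Bijective (RingHom.pi ψ)) (hψ : ∀ j, IsDeltaHom δQ (δN j) (ψ j))
    {S : Set Q} {j : ι} {z : N j} (hz : z ∈ Submodule.span (deltaConstants (δN j)) (ψ j '' S)) :
    ∃ z' ∈ Submodule.span (deltaConstants δQ) S, RingHom.pi ψ z' = Pi.single j z := by
  induction hz using Submodule.span_induction with
  | mem _ hs =>
    obtain ⟨s, hs, rfl⟩ := hs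
    obtain ⟨e, he⟩ := exists_deltaConstant_map_eq_single hbij hψ j 1
    refine ⟨e • s, Submodule.smul_mem _ _ (Submodule.subset_span hs), ?_⟩
    rw [Subring.smul_def, smul_eq_mul, map_mul, he, ← Pi.single_mul_left, OneMemClass.coe_one,
      one_mul, RingHom.pi_apply]
  | zero => exact ⟨0, zero_mem _, by simp⟩
  | add _ _ _ _ ih₁ ih₂ =>
    obtain ⟨z₁, hz₁, h₁⟩ := ih₁
    obtain ⟨z₂, hz₂, h₂⟩ := ih₂
    exact ⟨z₁ + z₂, add_mem hz₁ hz₂, by rw [map_add, h₁, h₂, Pi.single_add]⟩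
  | smul c _ _ ih =>
    obtain ⟨z', hz', h⟩ := ih
    obtain ⟨c', hc'⟩ := exists_deltaConstant_map_eq_single hbij hψ j c
    refine ⟨c' • z', Submodule.smul_mem _ _ hz', ?_⟩
    rw [Subring.smul_def, smul_eq_mul, map_mul, h, hc', ← Pi.single_mul, Subring.smul_def,
      smul_eq_mul]

theorem exists_mem_span_forall_map_eq [Finite ι] (hbij : Function.Bijective (RingHom.pi ψ))
    (hψ : ∀ j, IsDeltaHom δQ (δN j) (ψ j)) {S : Set Q} {z : ∀ j, N j}
    (hz : ∀ j, z j ∈ Submodule.span (deltaConstants (δN j)) (ψ j '' S)) :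
    ∃ z' ∈ Submodule.span (deltaConstants δQ) S, RingHom.pi ψ z' = z := by
  classical
  have := Fintype.ofFinite ι
  choose z' hz' hψz' using fun j => exists_mem_span_map_eq_single hbij hψ (hz j)
  refine ⟨∑ j, z' j, sum_mem fun j _ => hz' j, ?_⟩
  rw [map_sum, Finset.sum_congr rfl fun j _ => hψz' j, Finset.univ_sum_single]

theorem mem_fracSet_of_forall_map_mem_fracSet [Finite ι]
    (hbij : Function.Bijective (RingHom.pi ψ)) (hψ : ∀ j, IsDeltaHom δQ (δN j) (ψ j))
    {S : Set Q} {x : Q} (hx : ∀ j, ψ j x ∈ fracSet (ψ j '' S) (deltaConstants (δN j))) :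
    x ∈ fracSet S (deltaConstants δQ) := by
  simp only [mem_fracSet_iff] at hx ⊢
  choose r hr hr_unit hxr using hx
  obtain ⟨r', hr', hψr'⟩ := exists_mem_span_forall_map_eq hbij hψ hr
  obtain ⟨y, hy, hψy⟩ := exists_mem_span_forall_map_eq hbij hψ hxr
  refine ⟨r', hr', ?_, ?_⟩
  · rw [← MulEquiv.isUnit_map (RingEquiv.ofBijective _ hbij), RingEquiv.ofBijective_apply, hψr']
    exact Pi.isUnit_iff.mpr hr_unit
  · have hy_eq : y = x * r' := hbij.1 (hψy.trans (by rw [map_mul, hψr']; rfl))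
    rwa [← hy_eq]

theorem StronglyNormalCond.mem_fracSet {K L Q : Type u} [Field K] [CharZero K] [Field L]
    [Algebra K L] {δK : Fin m → Derivation ℤ K K} {δL : Fin m → Derivation ℤ L L}
    (hSN : StronglyNormalCond.{u} K L δK δL) [CommRing Q] [Algebra K Q] [IsNoetherianRing Q]
    [IsReduced Q] [IsFractionRing Q Q] {δQ : Fin m → Derivation ℤ Q Q}
    (hcQ : CommutingDerivations δQ) (hKQ : IsDeltaHom δK δQ (algebraMap K Q)) {τs τt : L →ₐ[K] Q}
    (hτs : IsDeltaHom δL δQ (τs : L →+* Q)) (hτt : IsDeltaHom δL δQ (τt : L →+* Q)) (b : L) :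
    τt b ∈ fracSet (Set.range τs) (deltaConstants δQ) := by
  have := krullDimLE_zero_of_isFractionRing_self Q
  have : IsArtinianRing Q := isArtinianRing_iff_krullDimLE_zero.mpr this
  choose δN hδN using fun p : PrimeSpectrum Q =>
    exists_isDeltaHom_algebraMap (N := Localization.AtPrime p.asIdeal) δQ
  refine mem_fracSet_of_forall_map_mem_fracSet PrimeSpectrum.toPiLocalization_bijective hδN
    fun p => ?_
  rw [← Set.range_comp]
  exact hSN.algebraMap_mem_fracSet hcQ hKQ hτs hτt
    (isField_localization_of_mem_minimalPrimes p.asIdeal.mem_minimalPrimes_of_krullDimLE_zero)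
    (hδN p) b

end Gluing

section TensorReduced

theorem isDomain_tensorProduct_of_isFractionRing (K A E N : Type*) [Field K] [CommRing A]
    [CommRing E] [CommRing N] [Nontrivial N] [Algebra K A] [Algebra K E] [Algebra A E]
    [IsScalarTower K A E] [Algebra K N] [IsFractionRing A E] [IsDomain (A ⊗[K] N)] :
    IsDomain (E ⊗[K] N) := by
  have includeLeft_injective :=
    Algebra.TensorProduct.includeLeft_injective (S := A) (A := A) (algebraMap K N).injective
  have : IsDomain A := includeLeft_injective.isDomain
  let g : A ⊗[K] N →ₐ[A] E ⊗[K] N :=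
    Algebra.TensorProduct.map (IsScalarTower.toAlgHom A A E) (AlgHom.id K N)
  let _ : Algebra (A ⊗[K] N) (E ⊗[K] N) := g.toRingHom.toAlgebra
  have : IsScalarTower A (A ⊗[K] N) (E ⊗[K] N) := .of_algebraMap_eq' g.comp_algebraMap.symm
  have isLocalization := IsLocalization.tensorProduct_tensorProduct K N (nonZeroDivisors A) E <| by
    ext a
    exact (Algebra.TensorProduct.map_tmul _ _ _ _).trans (by simp)
  have le_nonZeroDivisors :
      Algebra.algebraMapSubmonoid (A ⊗[K] N) (nonZeroDivisors A) ≤ nonZeroDivisors _ :=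
    map_le_nonZeroDivisors_of_injective _ includeLeft_injective le_rfl
  exact IsLocalization.isDomain_of_le_nonZeroDivisors _ le_nonZeroDivisors

open scoped IntermediateField.algebraAdjoinAdjoin in
theorem isDomain_adjoin_tensorProduct_of_algebraicIndependent {K L N : Type*} [Field K]
    [Field L] [Algebra K L] [CommRing N] [IsDomain N] [Algebra K N] {ι : Type*} {x : ι → L}
    (hx : AlgebraicIndependent K x) :
    IsDomain (IntermediateField.adjoin K (Set.range x) ⊗[K] N) := by
  let A := Algebra.adjoin K (Set.range x)
  let e : A ⊗[K] N ≃ₐ[K] N ⊗[K] MvPolynomial ι K :=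
    (Algebra.TensorProduct.comm K A N).trans
      (Algebra.TensorProduct.congr AlgEquiv.refl hx.aevalEquiv.symm)
  have : IsDomain (A ⊗[K] N) :=
    (e.toRingEquiv.trans (MvPolynomial.algebraTensorAlgEquiv K N).toRingEquiv).toMulEquiv.isDomain
  exact isDomain_tensorProduct_of_isFractionRing K A (IntermediateField.adjoin K (Set.range x)) N

theorem isReduced_tensorProduct_of_isAlgebraic (K D L : Type*) [Field K] [CharZero K] [CommRing D]
    [IsDomain D] [Field L] [Algebra K D] [Algebra K L] [Algebra.IsAlgebraic K L] :
    IsReduced (L ⊗[K] D) := by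
  suffices IsReduced (D ⊗[K] L) from
    isReduced_of_injective _ (Algebra.TensorProduct.comm K L D).injective
  refine IsReduced.tensorProduct_of_flat_of_forall_fg fun B hB => ?_
  have : Algebra.FiniteType K B := B.fg_iff_finiteType.mp hB
  have : Algebra.IsAlgebraic K B := Algebra.IsAlgebraic.of_injective B.val Subtype.val_injective
  let _ : Field B := (Subalgebra.isField_of_algebraic B).toField
  have : Algebra.FormallyUnramified K B := Algebra.FormallyUnramified.of_isSeparable K B
  have : IsReduced (FractionRing D ⊗[K] B) :=
    Algebra.FormallyUnramified.isReduced_of_field (FractionRing D) _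
  let f : D ⊗[K] B →ₐ[K] FractionRing D ⊗[K] B :=
    Algebra.TensorProduct.map (IsScalarTower.toAlgHom K D (FractionRing D)) (AlgHom.id K B)
  exact isReduced_of_injective f <| Module.Flat.rTensor_preserves_injective_linearMap
    (IsScalarTower.toAlgHom K D (FractionRing D)).toLinearMap
    (IsFractionRing.injective D (FractionRing D))

/-- For `E ⊆ L` generated by a transcendence basis, `L ⊗[K] N ≃ L ⊗[E] (E ⊗[K] N)`, where
`E ⊗[K] N` is a domain and `L` is algebraic over `E`. -/
theorem isReduced_tensorProduct (K L N : Type*) [Field K] [CharZero K] [Field L] [Algebra K L]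
    [CommRing N] [IsDomain N] [Algebra K N] : IsReduced (L ⊗[K] N) := by
  obtain ⟨s, hs⟩ := exists_isTranscendenceBasis K L
  let E := IntermediateField.adjoin K (Set.range ((↑) : s → L))
  have : IsDomain (E ⊗[K] N) := isDomain_adjoin_tensorProduct_of_algebraicIndependent hs.1
  have : Algebra.IsAlgebraic E L := hs.isAlgebraic_field
  have := isReduced_tensorProduct_of_isAlgebraic E (E ⊗[K] N) L
  exact isReduced_of_injective _
    (Algebra.TensorProduct.cancelBaseChange K E E L N).symm.injective

end TensorReduced

section Stability

variable {K L : Type*} [Field K] [Field L] [Algebra K L] (D : Derivation ℤ L L)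

theorem derivation_mem_of_mem_adjoin {s : Set L} {E : IntermediateField K L} (hsE : s ⊆ E)
    (hK : ∀ a, D (algebraMap K L a) ∈ E) (hs : ∀ x ∈ s, D x ∈ E) {x : L}
    (hx : x ∈ IntermediateField.adjoin K s) : D x ∈ E := by
  have hle : IntermediateField.adjoin K s ≤ E := IntermediateField.adjoin_le_iff.mpr hsE
  induction hx using IntermediateField.adjoin_induction with
  | mem x hx => exact hs x hx
  | algebraMap a => exact hK a
  | add x y _ _ hDx hDy => exact map_add D x y ▸ add_mem hDx hDy
  | inv x hx hDx =>
    rw [Derivation.leibniz_inv]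
    exact mul_mem (neg_mem (pow_mem (inv_mem (hle hx)) 2)) hDx
  | mul x y hx hy hDx hDy =>
    rw [Derivation.leibniz]
    exact add_mem (mul_mem (hle hx) hDy) (mul_mem (hle hy) hDx)

/-- Modulo `B`, the restriction of `D` to `B` is a derivation that vanishes on `A`. -/
theorem derivation_algebraMap_mem_range {A B C : Type*} [CommRing A] [CommRing B] [CommRing C]
    [Algebra A B] [Algebra B C] [Algebra.FormallyUnramified A B] (D : Derivation ℤ C C)
    (hD : ∀ a, D (algebraMap B C (algebraMap A B a)) ∈ (algebraMap B C).range) (b : B) :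
    D (algebraMap B C b) ∈ (algebraMap B C).range := by
  let range : Submodule B C := LinearMap.range (Algebra.linearMap B C)
  let D' : Derivation ℤ B (C ⧸ range) := range.mkQ.compDer (D.compAlgebraMap B)
  have hD' : D' = 0 := derivation_eq_zero_of_formallyUnramified (A := A) D' fun a =>
    (Submodule.Quotient.mk_eq_zero range).mpr (hD a)
  exact (Submodule.Quotient.mk_eq_zero range).mp (DFunLike.congr_fun hD' b)

theorem derivation_mem_of_isAlgebraic [CharZero K] {F E : IntermediateField K L} (hFE : F ≤ E)
    [Algebra.IsAlgebraic F L] (hF : ∀ x ∈ F, D x ∈ E) {x : L} (hx : x ∈ E) : D x ∈ E := by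
  let _ : Algebra F E := (IntermediateField.inclusion hFE).toAlgebra
  have : IsScalarTower F E L := .of_algebraMap_eq fun _ => rfl
  have : Algebra.IsAlgebraic F E := .of_injective (IsScalarTower.toAlgHom F E L)
    (algebraMap E L).injective
  have : Algebra.FormallyUnramified F E := .of_isSeparable F E
  obtain ⟨y, hy⟩ := derivation_algebraMap_mem_range (A := F) (B := E) D
    (fun a => ⟨⟨_, hF a a.2⟩, rfl⟩) ⟨x, hx⟩
  exact hy ▸ y.2

end Stability

section FiniteGeneration

variable {m : ℕ} {K L N : Type*} [Field K] [Field L] [Algebra K L] {δK : Fin m → Derivation ℤ K K}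
  {δL : Fin m → Derivation ℤ L L}

theorem FinitelyDeltaGenerated.exists_finset_eq_top (hfg : FinitelyDeltaGenerated K L δL) :
    ∃ S : Finset L, ∀ E : IntermediateField K L, ↑S ⊆ (E : Set L) →
      (∀ i, ∀ x ∈ E, δL i x ∈ E) → E = ⊤ := by
  obtain ⟨S, hS⟩ := hfg
  refine ⟨S, fun E hSE hE => top_le_iff.mp (hS ▸ IntermediateField.adjoin_le_iff.mpr ?_)⟩
  rintro _ ⟨a, ha, w, rfl⟩
  change iterDeriv δL w a ∈ E
  induction w with
  | nil => exact hSE ha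
  | cons i w ih => exact hE i _ ih

theorem FinitelyDeltaGenerated.essFiniteType_of_finite [CharZero K]
    (hKL : IsDeltaHom δK δL (algebraMap K L)) (hfg : FinitelyDeltaGenerated K L δL) {ι : Type*}
    [Finite ι] {x : ι → L} (hx : IsTranscendenceBasis K x) : Algebra.EssFiniteType K L := by
  obtain ⟨S, hS⟩ := hfg.exists_finset_eq_top
  have : Algebra.IsAlgebraic (IntermediateField.adjoin K (Set.range x)) L := hx.isAlgebraic_field
  let G : Set L := Set.range x ∪ (⋃ i, δL i '' Set.range x) ∪ S
  have hG : G.Finite := ((Set.finite_range x).union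
    (Set.finite_iUnion fun i => (Set.finite_range x).image _)).union S.finite_toSet
  have hGE : G ⊆ IntermediateField.adjoin K G := IntermediateField.subset_adjoin _ _
  have hxE : Set.range x ⊆ IntermediateField.adjoin K G := fun y hy => hGE (.inl (.inl hy))
  have adjoin_eq_top : IntermediateField.adjoin K G = ⊤ := by
    refine hS _ (Set.subset_union_right.trans hGE) fun i y hy => ?_
    refine derivation_mem_of_isAlgebraic (δL i) (IntermediateField.adjoin_le_iff.mpr hxE) ?_ hy
    refine fun z => derivation_mem_of_mem_adjoin (δL i) hxE (fun a => ?_) fun b hb => ?_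
    · exact hKL i a ▸ algebraMap_mem _ _
    · exact hGE (.inl (.inr (Set.mem_iUnion.mpr ⟨i, b, hb, rfl⟩)))
  rw [← IntermediateField.fg_top_iff, ← adjoin_eq_top]
  exact IntermediateField.fg_adjoin_of_finite hG

variable [Field N] [Algebra L N]

theorem mem_adjoin_of_mem_fracSet {C : Set N} {x : N}
    (hx : x ∈ fracSet (Set.range (algebraMap L N)) C) : x ∈ IntermediateField.adjoin L C := by
  have of_mem_dotSet {r : N} (hr : r ∈ dotSet (Set.range (algebraMap L N)) C) :
      r ∈ IntermediateField.adjoin L C := by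
    obtain ⟨n, s, t, hs, ht, rfl⟩ := hr
    refine sum_mem fun i _ => mul_mem ?_ (IntermediateField.subset_adjoin _ _ (ht i))
    obtain ⟨a, ha⟩ := hs i
    exact ha ▸ algebraMap_mem _ a
  obtain ⟨r, r', hr, hr', hunit, h⟩ := hx
  exact eq_div_of_mul_eq hunit.ne_zero h ▸ div_mem (of_mem_dotSet hr) (of_mem_dotSet hr')

variable [Algebra K N] [IsScalarTower K L N] {δN : Fin m → Derivation ℤ N N}

/-- The image `ρ(L)` lies in an extension of `L` by finitely many constants. -/
theorem FinitelyDeltaGenerated.finite_of_algebraicIndependent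
    (hfg : FinitelyDeltaGenerated K L δL) (hLN : IsDeltaHom δL δN (algebraMap L N))
    {ρ : L →ₐ[K] N} (hρ : IsDeltaHom δL δN (ρ : L →+* N))
    (hρN : ∀ b, ρ b ∈ fracSet (Set.range (algebraMap L N)) (deltaConstants δN)) {ι : Type*}
    {x : ι → L} (hx : AlgebraicIndependent L (ρ ∘ x)) : Finite ι := by
  classical
  obtain ⟨S, hS⟩ := hfg.exists_finset_eq_top
  choose C hC hρC using fun b =>
    IntermediateField.exists_finset_of_mem_adjoin (mem_adjoin_of_mem_fracSet (hρN b))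
  let F := IntermediateField.adjoin L (S.biUnion C : Set N)
  have mem_constants {c : N} (hc : c ∈ (S.biUnion C : Set N)) : c ∈ deltaConstants δN := by
    obtain ⟨a, -, hca⟩ := Finset.mem_biUnion.mp (Finset.mem_coe.mp hc)
    exact hC a hca
  have hF (i) {y} (hy : y ∈ F) : δN i y ∈ F :=
    derivation_mem_of_mem_adjoin (δN i) (IntermediateField.subset_adjoin _ _)
      (fun a => hLN i a ▸ F.algebraMap_mem _) (fun c hc => mem_constants hc i ▸ F.zero_mem) hy
  have hρF (b : L) : ρ b ∈ F := by
    have : (F.restrictScalars K).comap ρ = ⊤ := by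
      refine hS _ (fun a ha => ?_) fun i b hb => ?_
      · exact IntermediateField.adjoin.mono _ _ _
          (mod_cast Finset.subset_biUnion_of_mem C ha) (hρC a)
      · change ρ (δL i b) ∈ F
        exact hρ i b ▸ hF i hb
    exact this.ge (IntermediateField.mem_top (x := b))
  have : Algebra.EssFiniteType L F := IntermediateField.essFiniteType_iff.mpr ⟨S.biUnion C, rfl⟩
  have : AlgebraicIndependent L fun j => (⟨ρ (x j), hρF (x j)⟩ : F) := .of_comp F.val hx
  exact _root_.finite_of_algebraicIndependent this

end FiniteGeneration

section TensorSquare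

theorem algebraicIndependent_one_tmul {K A S ι : Type*} [CommRing K] [CommRing A] [CommRing S]
    [Algebra K A] [Algebra K S] [Module.Flat K S] {x : ι → A} (hx : AlgebraicIndependent K x) :
    AlgebraicIndependent S fun j => (1 : S) ⊗ₜ[K] x j := by
  let e := (MvPolynomial.algebraTensorAlgEquiv (σ := ι) K S).symm
  let f : S ⊗[K] MvPolynomial ι K →ₐ[S] S ⊗[K] A :=
    Algebra.TensorProduct.map (AlgHom.id S S) (MvPolynomial.aeval x)
  have hf : Function.Injective f :=
    Module.Flat.lTensor_preserves_injective_linearMap (M := S) (MvPolynomial.aeval x).toLinearMap hx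
  have haeval : MvPolynomial.aeval (fun j => (1 : S) ⊗ₜ[K] x j) = f.comp e.toAlgHom :=
    MvPolynomial.algHom_ext fun j => by simp [f, e]
  rw [AlgebraicIndependent, haeval]
  exact hf.comp e.injective

theorem exists_mem_minimalPrimes_algebraicIndependent {A R ι : Type*} [CommRing A] [IsDomain A]
    [CommRing R] [Algebra A R] {x : ι → R} (hx : AlgebraicIndependent A x) :
    ∃ (q : Ideal R) (_ : q.IsPrime), q ∈ minimalPrimes R ∧
      AlgebraicIndependent A (algebraMap R (Localization.AtPrime q) ∘ x) := by
  let f : MvPolynomial ι A →ₐ[A] R := MvPolynomial.aeval x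
  obtain ⟨q, hq, hqf⟩ := Ideal.exists_minimalPrimes_comap_eq (I := ⊥) f.toRingHom ⊥ <| by
    rw [Ideal.comap_bot_of_injective f.toRingHom hx]
    exact (IsDomain.minimalPrimes_eq_singleton_bot (MvPolynomial ι A)).ge rfl
  have hq_prime : q.IsPrime := hq.isPrime
  refine ⟨q, hq_prime, hq, (injective_iff_map_eq_zero _).mpr fun p hp => ?_⟩
  have hfp : algebraMap R (Localization.AtPrime q) (f p) = 0 :=
    (MvPolynomial.aeval_algebraMap_apply _ x p).symm.trans hp
  have hfpq : f p ∈ q := by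
    by_contra h
    exact (IsLocalization.map_units (Localization.AtPrime q) (⟨f p, h⟩ : q.primeCompl)).ne_zero hfp
  exact hqf.le hfpq

variable {m : ℕ} {K L : Type*} [Field K] [Field L] [Algebra K L] {δL : Fin m → Derivation ℤ L L}
  {δT : Fin m → Derivation ℤ (L ⊗[K] L) (L ⊗[K] L)}

theorem isDeltaHom_includeLeft
    (hδT : ∀ i (a b : L), δT i (a ⊗ₜ[K] b) = δL i a ⊗ₜ[K] b + a ⊗ₜ[K] δL i b) :
    IsDeltaHom δL δT (Algebra.TensorProduct.includeLeft : L →ₐ[K] L ⊗[K] L) := fun i a =>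
  (hδT i a 1).trans (by simp)

theorem isDeltaHom_includeRight
    (hδT : ∀ i (a b : L), δT i (a ⊗ₜ[K] b) = δL i a ⊗ₜ[K] b + a ⊗ₜ[K] δL i b) :
    IsDeltaHom δL δT (Algebra.TensorProduct.includeRight : L →ₐ[K] L ⊗[K] L) := fun i a =>
  (hδT i 1 a).trans (by simp)

theorem isDeltaHom_of_closure_eq_top {T M : Type*} [CommRing T] [CommRing M]
    {δ : Fin m → Derivation ℤ T T} {δM : Fin m → Derivation ℤ M M} {f : T →+* M} {s : Set T}
    (hs : Subring.closure s = ⊤) (hf : ∀ i, ∀ x ∈ s, δM i (f x) = f (δ i x)) :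
    IsDeltaHom δ δM f := fun i x => by
  have hx : x ∈ Subring.closure s := hs ▸ Subring.mem_top x
  induction hx using Subring.closure_induction with
  | mem x hx => exact hf i x hx
  | zero => simp only [map_zero]
  | one => simp only [map_one, Derivation.map_one_eq_zero, map_zero]
  | add x y _ _ hx hy => simp only [map_add, hx, hy]
  | neg x _ hx => simp only [map_neg, hx]
  | mul x y _ _ hx hy => simp only [map_mul, Derivation.leibniz, smul_eq_mul, map_add, hx, hy]

theorem commutingDerivations_of_closure_eq_top {T : Type*} [CommRing T]
    {δ : Fin m → Derivation ℤ T T} {s : Set T} (hs : Subring.closure s = ⊤)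
    (hδ : ∀ i j, ∀ x ∈ s, δ i (δ j x) = δ j (δ i x)) : CommutingDerivations δ := fun i j x => by
  have hx : x ∈ Subring.closure s := hs ▸ Subring.mem_top x
  rw [← sub_eq_zero, ← Derivation.commutator_apply]
  induction hx using Subring.closure_induction with
  | mem x hx => rw [Derivation.commutator_apply, hδ i j x hx, sub_self]
  | zero => exact map_zero _
  | one => exact Derivation.map_one_eq_zero _
  | add x y _ _ hx hy => rw [map_add, hx, hy, add_zero]
  | neg x _ hx => rw [map_neg, hx, neg_zero]
  | mul x y _ _ hx hy => rw [Derivation.leibniz, hx, hy, smul_zero, smul_zero, add_zero]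

theorem commutingDerivations_tensorProduct (hcL : CommutingDerivations δL)
    (hδT : ∀ i (a b : L), δT i (a ⊗ₜ[K] b) = δL i a ⊗ₜ[K] b + a ⊗ₜ[K] δL i b) :
    CommutingDerivations δT := by
  refine commutingDerivations_of_closure_eq_top
    (Algebra.TensorProduct.closure_range_union_range_eq_top K L L) ?_
  rintro i j _ (⟨a, rfl⟩ | ⟨a, rfl⟩)
  · exact (isDeltaHom_includeLeft hδT).derivation_comm hcL i j a
  · exact (isDeltaHom_includeRight hδT).derivation_comm hcL i j a

theorem isDeltaHom_productMap
    (hδT : ∀ i (a b : L), δT i (a ⊗ₜ[K] b) = δL i a ⊗ₜ[K] b + a ⊗ₜ[K] δL i b)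
    {M : Type*} [CommRing M] [Algebra K M] {δM : Fin m → Derivation ℤ M M} {τs τt : L →ₐ[K] M}
    (hs : IsDeltaHom δL δM τs) (ht : IsDeltaHom δL δM τt) :
    IsDeltaHom δT δM (Algebra.TensorProduct.productMap τs τt) := by
  refine isDeltaHom_of_closure_eq_top
    (Algebra.TensorProduct.closure_range_union_range_eq_top K L L) ?_
  rintro i _ (⟨a, rfl⟩ | ⟨a, rfl⟩)
  · refine Eq.trans ?_ (congrArg _ (isDeltaHom_includeLeft hδT i a).symm)
    simpa using hs i a
  · refine Eq.trans ?_ (congrArg _ (isDeltaHom_includeRight hδT i a).symm)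
    simpa using ht i a

end TensorSquare

theorem StronglyNormalCond.essFiniteType {m : ℕ} {K L : Type u} [Field K] [CharZero K] [Field L]
    [Algebra K L] {δK : Fin m → Derivation ℤ K K} {δL : Fin m → Derivation ℤ L L}
    (hSN : StronglyNormalCond.{u} K L δK δL) (hcL : CommutingDerivations δL)
    (hKL : IsDeltaHom δK δL (algebraMap K L)) (hfg : FinitelyDeltaGenerated K L δL)
    {δT : Fin m → Derivation ℤ (L ⊗[K] L) (L ⊗[K] L)}
    (hδT : ∀ i (a b : L), δT i (a ⊗ₜ[K] b) = δL i a ⊗ₜ[K] b + a ⊗ₜ[K] δL i b) :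
    Algebra.EssFiniteType K L := by
  obtain ⟨B, hB⟩ := exists_isTranscendenceBasis K L
  have : IsReduced (L ⊗[K] L) := isReduced_tensorProduct K L L
  obtain ⟨q, _, hq, hqB⟩ := exists_mem_minimalPrimes_algebraicIndependent
    (algebraicIndependent_one_tmul (S := L) hB.1)
  let N := Localization.AtPrime q
  have hN : IsField N := isField_localization_of_mem_minimalPrimes hq
  let _ : Field N := hN.toField
  obtain ⟨δN, hδN⟩ := exists_isDeltaHom_algebraMap (N := N) δT
  have hs := isDeltaHom_includeLeft hδT
  have ht := isDeltaHom_includeRight hδT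
  have hρN := hSN.algebraMap_mem_fracSet (commutingDerivations_tensorProduct hcL hδT)
    (hs.comp hKL) hs ht hN hδN
  have : Finite B := hfg.finite_of_algebraicIndependent (hδN.comp hs)
    (ρ := (IsScalarTower.toAlgHom K (L ⊗[K] L) N).comp Algebra.TensorProduct.includeRight)
    (hδN.comp ht) hρN hqB
  exact hfg.essFiniteType_of_finite hKL hB

section Main

variable {m : ℕ} {K L : Type u} [Field K] [Field L] [Algebra K L]
  {δK : Fin m → Derivation ℤ K K} {δL : Fin m → Derivation ℤ L L}
  {δT : Fin m → Derivation ℤ (L ⊗[K] L) (L ⊗[K] L)}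

theorem stronglyNormalCond_of_forall_mem_fracSet
    (hδT : ∀ i (a b : L), δT i (a ⊗ₜ[K] b) = δL i a ⊗ₜ[K] b + a ⊗ₜ[K] δL i b)
    {Q : Type*} [CommRing Q] [Algebra (L ⊗[K] L) Q] [FaithfulSMul (L ⊗[K] L) Q]
    {δQ : Fin m → Derivation ℤ Q Q} (hδQ : IsDeltaHom δT δQ (algebraMap (L ⊗[K] L) Q))
    (h : ∀ b : L, algebraMap (L ⊗[K] L) Q (1 ⊗ₜ b) ∈
      fracSet (Set.range fun a : L => algebraMap (L ⊗[K] L) Q (a ⊗ₜ 1)) (deltaConstants δQ)) :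
    StronglyNormalCond.{u} K L δK δL := by
  intro M _ _ _ δM _ _ τs τt hτs hτt b
  have hφ := isDeltaHom_productMap hδT (fun i a => (hτs i a).symm) fun i a => (hτt i a).symm
  have hker : RingHom.ker (algebraMap (L ⊗[K] L) Q) ≤
      RingHom.ker (Algebra.TensorProduct.productMap τs τt : L ⊗[K] L →+* M) := by
    rw [(RingHom.injective_iff_ker_eq_bot _).mp (FaithfulSMul.algebraMap_injective (L ⊗[K] L) Q)]
    exact bot_le
  have hb : τt b ∈ fracSet (Set.range τs) (deltaConstants δM) := by
    simpa [← AlgHom.coe_comp] using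
      map_mem_fracSet_of_map_mem_fracSet hφ hδQ hker (isDeltaHom_includeLeft hδT) (h b)
  exact hb

variable [CharZero K]

theorem StronglyNormalCond.mem_fracSet_of_isFractionRing (hSN : StronglyNormalCond.{u} K L δK δL)
    (hcL : CommutingDerivations δL) (hKL : IsDeltaHom δK δL (algebraMap K L))
    (hfg : FinitelyDeltaGenerated K L δL)
    (hδT : ∀ i (a b : L), δT i (a ⊗ₜ[K] b) = δL i a ⊗ₜ[K] b + a ⊗ₜ[K] δL i b)
    (Q : Type u) [CommRing Q] [Algebra (L ⊗[K] L) Q] [IsFractionRing (L ⊗[K] L) Q]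
    {δQ : Fin m → Derivation ℤ Q Q} (hδQ : IsDeltaHom δT δQ (algebraMap (L ⊗[K] L) Q)) (b : L) :
    algebraMap (L ⊗[K] L) Q (1 ⊗ₜ b) ∈
      fracSet (Set.range fun a : L => algebraMap (L ⊗[K] L) Q (a ⊗ₜ 1)) (deltaConstants δQ) := by
  have : Algebra.EssFiniteType K L := hSN.essFiniteType hcL hKL hfg hδT
  have : IsNoetherianRing (L ⊗[K] L) := Algebra.EssFiniteType.isNoetherianRing L (L ⊗[K] L)
  have : IsNoetherianRing Q := IsLocalization.isNoetherianRing (nonZeroDivisors (L ⊗[K] L)) Q this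
  have : IsReduced Q := isReduced_localizationPreserves (nonZeroDivisors (L ⊗[K] L)) Q
    (isReduced_tensorProduct K L L)
  have : IsFractionRing Q Q := IsFractionRing.self_iff_nonZeroDivisors_le_isUnit.mpr
    (IsFractionRing.nonZeroDivisors_eq_isUnit (L ⊗[K] L) Q).le
  have : Algebra.FormallyEtale (L ⊗[K] L) Q :=
    .of_isLocalization (nonZeroDivisors (L ⊗[K] L))
  let _ : Algebra K Q := Algebra.compHom Q (algebraMap K (L ⊗[K] L))
  have : IsScalarTower K (L ⊗[K] L) Q := .of_algebraMap_eq fun _ => rfl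
  let π : L ⊗[K] L →ₐ[K] Q := IsScalarTower.toAlgHom K (L ⊗[K] L) Q
  have hs := hδQ.comp (isDeltaHom_includeLeft hδT)
  have ht := hδQ.comp (isDeltaHom_includeRight hδT)
  exact hSN.mem_fracSet (hδQ.commutingDerivations (commutingDerivations_tensorProduct hcL hδT))
    (hs.comp hKL) (τs := π.comp Algebra.TensorProduct.includeLeft)
    (τt := π.comp Algebra.TensorProduct.includeRight) hs ht b

theorem stronglyNormal_iff_deltaNormal_quot_general
    (hcL : CommutingDerivations δL) (hKL : IsDeltaHom δK δL (algebraMap K L))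
    (hfg : FinitelyDeltaGenerated K L δL)
    (hδT : ∀ i (a b : L), δT i (a ⊗ₜ[K] b) = δL i a ⊗ₜ[K] b + a ⊗ₜ[K] δL i b)
    (Q : Type u) [CommRing Q] [hZ : Algebra ℤ Q] [Algebra (L ⊗[K] L) Q]
    [IsFractionRing (L ⊗[K] L) Q] (δQ : Fin m → Derivation ℤ Q Q)
    (hδQ : ∀ i x, δQ i (algebraMap (L ⊗[K] L) Q x) = algebraMap (L ⊗[K] L) Q (δT i x)) :
    StronglyNormalCond.{u} K L δK δL ↔
      ∀ b : L, algebraMap (L ⊗[K] L) Q (1 ⊗ₜ b) ∈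
        fracSet (Set.range fun a : L => algebraMap (L ⊗[K] L) Q (a ⊗ₜ 1))
          {x : Q | ∀ i, δQ i x = 0} := by
  -- `FractionRing` carries its own `ℤ`-algebra instance.
  obtain rfl : hZ = Ring.toIntAlgebra Q := Subsingleton.elim _ _
  exact ⟨fun hSN => hSN.mem_fracSet_of_isFractionRing hcL hKL hfg hδT Q hδQ,
    stronglyNormalCond_of_forall_mem_fracSet hδT hδQ⟩

end Main

/-- With `K^Δ` algebraically closed and `L|K` finitely `Δ`-generated with
no new constants: `L|K` is strongly normal iff `L|K` is `Δ`-normal with respect to the pair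
`τs, τt : L → Quot(L ⊗_K L)`, `τs(a) = a ⊗ 1`, `τt(a) = 1 ⊗ a`, where `Quot(L ⊗_K L)` is
the total ring of fractions of `L ⊗_K L` with the (unique) extended `Δ`-structure. -/
theorem stronglyNormal_iff_deltaNormal_quot {m : ℕ}
    (K L : Type u) [Field K] [CharZero K] [Field L] [CharZero L] [Algebra K L]
    (δK : Fin m → Derivation ℤ K K) (δL : Fin m → Derivation ℤ L L)
    (hcK : CommutingDerivations δK) (hcL : CommutingDerivations δL)
    (hcompat : ∀ i a, δL i (algebraMap K L a) = algebraMap K L (δK i a))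
    (halgcl : IsAlgClosed ↥(constantSubfield δK))
    (hfg : FinitelyDeltaGenerated K L δL)
    (hnonew : ∀ a : L, (∀ i, δL i a = 0) → a ∈ (algebraMap K L).range)
    -- the (unique) `Δ`-ring structure on `L ⊗_K L`:
    (δT : Fin m → Derivation ℤ (L ⊗[K] L) (L ⊗[K] L))
    (hδT : ∀ i (a b : L), δT i (a ⊗ₜ[K] b) = (δL i a) ⊗ₜ[K] b + a ⊗ₜ[K] (δL i b))
    -- its (unique) extension to the total ring of fractions `Quot(L ⊗_K L)`:
    (δQ : Fin m → Derivation ℤ (FractionRing (L ⊗[K] L)) (FractionRing (L ⊗[K] L)))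
    (hδQ : ∀ i x, δQ i (algebraMap (L ⊗[K] L) (FractionRing (L ⊗[K] L)) x)
        = algebraMap (L ⊗[K] L) (FractionRing (L ⊗[K] L)) (δT i x)) :
    StronglyNormalCond.{u} K L δK δL ↔
      ∀ b : L, algebraMap (L ⊗[K] L) (FractionRing (L ⊗[K] L)) ((1 : L) ⊗ₜ[K] b) ∈
        fracSet
          (Set.range fun a : L =>
            algebraMap (L ⊗[K] L) (FractionRing (L ⊗[K] L)) (a ⊗ₜ[K] (1 : L)))
          {x : FractionRing (L ⊗[K] L) | ∀ i, δQ i x = 0} := by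
  exact stronglyNormal_iff_deltaNormal_quot_general hcL hcompat hfg hδT _ δQ hδQ
end

section
/- Let K be a Δ-field and L|K a finitely Δ-generated extension of Δ-fields (all of characteristic zero). Then the ring L ⊗_K L is reduced and has only finitely many minimal prime ideals. -/
open scoped TensorProduct

/-!
List the derivatives `θ (s)` of the generators in an order compatible with the derivations, and
call a derivative a leader if it is algebraic over the field generated by the preceding ones.
Differentiating the minimal polynomial of a leader shows that each proper derivative of a leader is
a rational function of the derivatives preceding it. By Dickson's lemma all but finitely many
leaders are proper derivatives of leaders, so `L` is finite over the field generated by the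
derivatives that are not leaders, and these are algebraically independent.

If `A ⊆ L` is the polynomial ring over `K` in these derivatives and `R` is a domain over `K`
(such as `L`), then `L ⊗[K] R = L ⊗[A] (A ⊗[K] R)`, where `A ⊗[K] R` is a polynomial ring over `R`,
hence a domain. By flatness of `L` over `A` the tensor product embeds into
`L ⊗[A] Frac (A ⊗[K] R)`, which is a finite unramified algebra over a field.
-/

section TensorProduct

theorem minimalPrimes_finite_of_injective {R S : Type*} [CommRing R] [CommRing S] {f : R →+* S}
    (hf : Function.Injective f) (hS : (minimalPrimes S).Finite) : (minimalPrimes R).Finite := by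
  refine (hS.image (Ideal.comap f)).subset fun p hp ↦ ?_
  refine Ideal.exists_minimalPrimes_comap_eq f p ?_
  rwa [Ideal.comap_bot_of_injective f hf]

theorem isReduced_and_minimalPrimes_finite_of_formallyUnramified (F Q : Type*) [Field F]
    [CommRing Q] [Algebra F Q] [Algebra.FormallyUnramified F Q] [Algebra.EssFiniteType F Q] :
    IsReduced Q ∧ (minimalPrimes Q).Finite := by
  have : Module.Finite F Q := Algebra.FormallyUnramified.finite_of_free F Q
  have : IsArtinianRing Q := IsArtinianRing.of_finite F Q
  exact ⟨Algebra.FormallyUnramified.isReduced_of_field F Q,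
    minimalPrimes.finite_of_isNoetherianRing Q⟩

theorem isReduced_and_minimalPrimes_finite_tensorProduct_of_flat (A B D : Type*) [CommRing A]
    [CommRing B] [Algebra A B] [Algebra.FormallyUnramified A B] [Algebra.EssFiniteType A B]
    [Module.Flat A B] [CommRing D] [IsDomain D] [Algebra A D] :
    IsReduced (D ⊗[A] B) ∧ (minimalPrimes (D ⊗[A] B)).Finite := by
  let F := FractionRing D
  let f : D ⊗[A] B →ₐ[A] F ⊗[A] B :=
    Algebra.TensorProduct.map (IsScalarTower.toAlgHom A D F) (AlgHom.id A B)
  have hf : Function.Injective f :=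
    Module.Flat.rTensor_preserves_injective_linearMap
      (IsScalarTower.toAlgHom A D F).toLinearMap (IsFractionRing.injective D F)
  obtain ⟨hred, hfin⟩ := isReduced_and_minimalPrimes_finite_of_formallyUnramified F (F ⊗[A] B)
  exact ⟨isReduced_of_injective f hf, minimalPrimes_finite_of_injective (f := f.toRingHom) hf hfin⟩

theorem isDomain_adjoin_range_tensorProduct {ι K A : Type*} [CommRing K] [CommRing A] [Algebra K A]
    (R : Type*) [CommRing R] [IsDomain R] [Algebra K R] {x : ι → A}
    (hx : AlgebraicIndependent K x) :
    IsDomain (Algebra.adjoin K (Set.range x) ⊗[K] R) :=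
  let e : Algebra.adjoin K (Set.range x) ⊗[K] R ≃ₐ[K] MvPolynomial ι R :=
    (Algebra.TensorProduct.comm K _ R).trans
      ((Algebra.TensorProduct.congr AlgEquiv.refl hx.aevalEquiv.symm).trans
        ((MvPolynomial.algebraTensorAlgEquiv K R).restrictScalars K))
  e.toMulEquiv.isDomain _

open scoped IntermediateField.algebraAdjoinAdjoin in
theorem isReduced_and_minimalPrimes_finite_tensorProduct_of_algebraicIndependent
    {ι K L : Type*} [Field K] [Field L] [Algebra K L]
    (R : Type*) [CommRing R] [IsDomain R] [Algebra K R] {x : ι → L} (hx : AlgebraicIndependent K x)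
    [FiniteDimensional (IntermediateField.adjoin K (Set.range x)) L]
    [Algebra.IsSeparable (IntermediateField.adjoin K (Set.range x)) L] :
    IsReduced (L ⊗[K] R) ∧ (minimalPrimes (L ⊗[K] R)).Finite := by
  let A := Algebra.adjoin K (Set.range x)
  let E := IntermediateField.adjoin K (Set.range x)
  have : IsScalarTower A E L := IsScalarTower.of_algebraMap_eq fun _ ↦ rfl
  have : Algebra.FormallyUnramified A L :=
    have : Algebra.FormallyUnramified A E := .of_isLocalization (nonZeroDivisors A)
    have : Algebra.FormallyUnramified E L := .of_isSeparable E L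
    .comp A E L
  have : Algebra.EssFiniteType A L :=
    have : Algebra.EssFiniteType A E := .of_isLocalization _ (nonZeroDivisors A)
    .comp A E L
  have : Module.Flat A L :=
    have : Module.Flat A E := IsLocalization.flat _ (nonZeroDivisors A)
    .trans A E L
  have : IsDomain (A ⊗[K] R) := isDomain_adjoin_range_tensorProduct R hx
  let e : L ⊗[K] R ≃+* (A ⊗[K] R) ⊗[A] L :=
    ((Algebra.TensorProduct.cancelBaseChange K A A L R).symm.trans
      (Algebra.TensorProduct.comm A L (A ⊗[K] R))).toRingEquiv
  obtain ⟨hred, hfin⟩ := isReduced_and_minimalPrimes_finite_tensorProduct_of_flat A L (A ⊗[K] R)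
  exact ⟨isReduced_of_injective e e.injective,
    minimalPrimes_finite_of_injective (f := (e : L ⊗[K] R →+* _)) e.injective hfin⟩

end TensorProduct

section OrderedFamily

theorem algebraicIndependent_of_transcendental_adjoin_Iio {ι R A : Type*} [LinearOrder ι]
    [CommRing R] [CommRing A] [Algebra R A] {x : ι → A}
    (hinj : Function.Injective (algebraMap R A))
    (hx : ∀ i, Transcendental (Algebra.adjoin R (x '' Set.Iio i)) (x i)) :
    AlgebraicIndependent R x := by
  have hfinset (s : Finset ι) : AlgebraicIndepOn R x (s : Set ι) := by
    induction s using Finset.induction_on_max with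
    | empty =>
      have : IsEmpty ((∅ : Finset ι) : Set ι) := by simp
      exact algebraicIndependent_empty_type_iff.mpr hinj
    | insert i s hi ih =>
      rw [Finset.coe_insert]
      have hle : Algebra.adjoin R (x '' s) ≤ Algebra.adjoin R (x '' Set.Iio i) :=
        Algebra.adjoin_mono (Set.image_mono hi)
      exact ih.insert fun halg ↦ hx i (halg.tower_top_of_subalgebra_le hle)
  exact algebraicIndependent_of_finite_type fun t ht ↦ ht.coe_toFinset ▸ hfinset ht.toFinset

variable {ι K L : Type*} [Field K] [Field L] [Algebra K L]

variable (K) in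
/-- The field generated over `K` by the terms of the family `a` that precede the index `i`. -/
def precedingField [Preorder ι] (a : ι → L) (i : ι) : IntermediateField K L :=
  IntermediateField.adjoin K (a '' Set.Iio i)

theorem mem_precedingField [Preorder ι] (a : ι → L) {i j : ι} (h : i < j) :
    a i ∈ precedingField K a j :=
  IntermediateField.subset_adjoin _ _ ⟨i, h, rfl⟩

variable (K) in
/-- The index `i` is a leader of the family `a` if `a i` is algebraic over the field generated by
the preceding terms. -/
def IsLeader [Preorder ι] (a : ι → L) (i : ι) : Prop :=
  IsAlgebraic (precedingField K a i) (a i)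

theorem isLeader_of_mem_precedingField [Preorder ι] {a : ι → L} {i : ι}
    (h : a i ∈ precedingField K a i) : IsLeader K a i :=
  isAlgebraic_algebraMap (⟨a i, h⟩ : precedingField K a i)

theorem algebraicIndependent_not_isLeader [LinearOrder ι] (a : ι → L) :
    AlgebraicIndependent K fun i : {i | ¬ IsLeader K a i} ↦ a i := by
  refine algebraicIndependent_of_transcendental_adjoin_Iio (algebraMap K L).injective
    fun i halg ↦ i.2 ?_
  refine halg.tower_top_of_subalgebra_le (B := (precedingField K a i).toSubalgebra) ?_
  refine Algebra.adjoin_le ?_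
  rintro _ ⟨j, hj, rfl⟩
  exact mem_precedingField a hj

theorem forall_mem_of_precedingField_le [Preorder ι] [WellFoundedLT ι] {a : ι → L}
    {F : IntermediateField K L} (hF : ∀ i, precedingField K a i ≤ F → a i ∈ F) (i : ι) :
    a i ∈ F := by
  induction i using WellFoundedLT.induction with
  | ind i ih =>
    refine hF i (IntermediateField.adjoin_le_iff.mpr ?_)
    rintro _ ⟨j, hj, rfl⟩
    exact ih j hj

theorem isAlgebraic_adjoin_not_isLeader [Preorder ι] [WellFoundedLT ι] (a : ι → L) (i : ι) :
    IsAlgebraic (IntermediateField.adjoin K (a '' {i | ¬ IsLeader K a i})) (a i) := by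
  let E := IntermediateField.adjoin K (a '' {i | ¬ IsLeader K a i})
  suffices a i ∈ (algebraicClosure E L).restrictScalars K from mem_algebraicClosure_iff.mp this
  refine forall_mem_of_precedingField_le (fun i hle ↦ ?_) i
  by_cases hi : IsLeader K a i
  · have : IsAlgebraic (algebraicClosure E L) (a i) :=
      hi.tower_top_of_subalgebra_le
        (B := ((algebraicClosure E L).restrictScalars K).toSubalgebra) hle
    exact mem_algebraicClosure_iff.mpr (this.restrictScalars E)
  · exact (algebraicClosure E L).algebraMap_mem
      ⟨a i, IntermediateField.subset_adjoin _ _ ⟨i, hi, rfl⟩⟩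

theorem finiteDimensional_adjoin_not_isLeader [Preorder ι] [WellFoundedLT ι] {a : ι → L}
    (htop : IntermediateField.adjoin K (Set.range a) = ⊤) {M : Set ι} (hM : M.Finite)
    (hmem : ∀ i, IsLeader K a i → i ∉ M → a i ∈ precedingField K a i) :
    FiniteDimensional (IntermediateField.adjoin K (a '' {i | ¬ IsLeader K a i})) L := by
  let E := IntermediateField.adjoin K (a '' {i | ¬ IsLeader K a i})
  let F := IntermediateField.adjoin E (a '' M)
  have hF (i : ι) : a i ∈ F.restrictScalars K := by
    refine forall_mem_of_precedingField_le (fun i hle ↦ ?_) i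
    by_cases hi : IsLeader K a i
    · by_cases hiM : i ∈ M
      · exact IntermediateField.subset_adjoin E _ ⟨i, hiM, rfl⟩
      · exact hle (hmem i hi hiM)
    · exact F.algebraMap_mem ⟨a i, IntermediateField.subset_adjoin _ _ ⟨i, hi, rfl⟩⟩
  have hFtop : F = ⊤ := by
    rw [← IntermediateField.restrictScalars_eq_top_iff (K := K), eq_top_iff, ← htop,
      IntermediateField.adjoin_le_iff]
    exact Set.range_subset_iff.mpr hF
  have : Finite (a '' M) := (hM.image a).to_subtype
  have : FiniteDimensional E F := by
    refine IntermediateField.finiteDimensional_adjoin ?_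
    rintro _ ⟨i, _, rfl⟩
    exact (isAlgebraic_adjoin_not_isLeader a i).isIntegral
  rw [hFtop] at this
  exact IntermediateField.topEquiv.toLinearEquiv.finiteDimensional

end OrderedFamily

section Derivation

variable {R K L : Type*} [CommRing R] [Field K] [Field L] [Algebra R L] [Algebra K L]
  (D : Derivation R L L) (F : IntermediateField K L)
  (hK : ∀ c : K, D (algebraMap K L c) ∈ F)

/-- The intermediate field of those `x ∈ F` for which `D x` is again in `F`. -/
def derivationPreimage : IntermediateField K L where
  carrier := {x | x ∈ F ∧ D x ∈ F}
  mul_mem' {x y} hx hy := by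
    refine ⟨mul_mem hx.1 hy.1, ?_⟩
    rw [D.leibniz]
    exact add_mem (mul_mem hx.1 hy.2) (mul_mem hy.1 hx.2)
  add_mem' {x y} hx hy := ⟨add_mem hx.1 hy.1, map_add D x y ▸ add_mem hx.2 hy.2⟩
  algebraMap_mem' c := ⟨F.algebraMap_mem c, hK c⟩
  inv_mem' x hx := by
    refine ⟨inv_mem hx.1, ?_⟩
    rw [D.leibniz_inv]
    exact mul_mem (neg_mem (pow_mem (inv_mem hx.1) 2)) hx.2

theorem aeval_mem_of_derivationPreimage {u : L} (hu : u ∈ F)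
    (q : Polynomial (derivationPreimage D F hK)) : Polynomial.aeval u q ∈ F := by
  rw [Polynomial.aeval_eq_sum_range]
  exact sum_mem fun i _ ↦ mul_mem (q.coeff i).2.1 (pow_mem hu i)

theorem derivation_aeval_sub_mem {u : L} (hu : u ∈ F)
    (q : Polynomial (derivationPreimage D F hK)) :
    D (Polynomial.aeval u q) - Polynomial.aeval u (Polynomial.derivative q) * D u ∈ F := by
  induction q using Polynomial.induction_on' with
  | add p q hp hq =>
    convert add_mem hp hq using 1
    simp only [map_add]
    ring
  | monomial n c =>
    convert mul_mem (pow_mem hu n) c.2.2 using 1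
    simp only [Polynomial.derivative_monomial, Polynomial.aeval_monomial, D.leibniz, D.leibniz_pow,
      map_mul, map_natCast, smul_eq_mul, nsmul_eq_mul, IntermediateField.algebraMap_apply]
    ring

theorem derivation_mem_of_isSeparable {u : L} (hu : u ∈ F)
    (hsep : IsSeparable (derivationPreimage D F hK) u) : D u ∈ F := by
  let p := minpoly (derivationPreimage D F hK) u
  have hne : Polynomial.aeval u (Polynomial.derivative p) ≠ 0 :=
    hsep.aeval_derivative_ne_zero (minpoly.aeval _ u)
  have hmem : Polynomial.aeval u (Polynomial.derivative p) * D u ∈ F := by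
    simpa [p, minpoly.aeval] using derivation_aeval_sub_mem D F hK hu p
  rw [← mul_div_cancel_left₀ (D u) hne]
  exact div_mem hmem (aeval_mem_of_derivationPreimage D F hK hu _)

variable {D} {ι : Type*} [Preorder ι] {a : ι → L} {σ : ι → ι}

theorem precedingField_le_derivationPreimage (hσ : StrictMono σ) (hlt : ∀ i, i < σ i)
    (ha : ∀ i, D (a i) = a (σ i)) (i : ι)
    (hK : ∀ c : K, D (algebraMap K L c) ∈ precedingField K a (σ i)) :
    precedingField K a i ≤ derivationPreimage D (precedingField K a (σ i)) hK := by
  refine IntermediateField.adjoin_le_iff.mpr ?_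
  rintro _ ⟨j, hj, rfl⟩
  exact ⟨mem_precedingField a (hj.trans (hlt i)), ha j ▸ mem_precedingField a (hσ hj)⟩

theorem IsLeader.mem_precedingField_of_derivation [CharZero L] (hσ : StrictMono σ)
    (hlt : ∀ i, i < σ i) (ha : ∀ i, D (a i) = a (σ i))
    (hK : ∀ c : K, D (algebraMap K L c) ∈ (⊥ : IntermediateField K L)) {i : ι}
    (hi : IsLeader K a i) : a (σ i) ∈ precedingField K a (σ i) := by
  let F := precedingField K a (σ i)
  have hKF (c : K) : D (algebraMap K L c) ∈ F := bot_le (a := F) (hK c)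
  have hle : precedingField K a i ≤ derivationPreimage D F hKF :=
    precedingField_le_derivationPreimage hσ hlt ha i hKF
  have halg : IsAlgebraic (derivationPreimage D F hKF) (a i) :=
    hi.tower_top_of_subalgebra_le (B := (derivationPreimage D F hKF).toSubalgebra) hle
  rw [← ha]
  exact derivation_mem_of_isSeparable D F hKF (mem_precedingField a (hlt i))
    (minpoly.irreducible halg.isIntegral).separable

end Derivation

section Dickson

variable {κ : Type*} {P : (κ →₀ ℕ) → Prop}

theorem add_of_forall_add_single (hP : ∀ k α, P α → P (α + Finsupp.single k 1)) (γ : κ →₀ ℕ)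
    {α : κ →₀ ℕ} (hα : P α) : P (α + γ) := by
  induction γ using Finsupp.induction_linear generalizing α with
  | zero => rwa [add_zero]
  | add f g hf hg => exact add_assoc α f g ▸ hg (hf hα)
  | single k n =>
    induction n with
    | zero => rwa [Finsupp.single_zero, add_zero]
    | succ n ih =>
      rw [Finsupp.single_add, ← add_assoc]
      exact hP k _ ih

theorem exists_eq_add_single_of_not_minimal (hP : ∀ k α, P α → P (α + Finsupp.single k 1))
    {α : κ →₀ ℕ} (hα : P α) (hmin : ¬ Minimal P α) :
    ∃ k β, P β ∧ α = β + Finsupp.single k 1 := by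
  obtain ⟨γ, hγα, hγ⟩ := (not_minimal_iff_exists_lt hα).mp hmin
  obtain ⟨hle, k, hk⟩ := Finsupp.lt_def.mp hγα
  have hsingle : Finsupp.single k 1 ≤ α - γ := by
    rw [Finsupp.single_le_iff, Finsupp.tsub_apply]
    omega
  obtain ⟨ε, hε⟩ := exists_add_of_le hsingle
  refine ⟨k, γ + ε, add_of_forall_add_single hP ε hγ, ?_⟩
  rw [add_assoc, add_comm ε, ← hε, add_tsub_cancel_of_le hle]

end Dickson

section Ranking

/-- The indices `(α, j)` of the derivatives `θ^α (s j)` of a family `s` indexed by `ι`, with respect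
to derivations indexed by `κ`. They are ordered by a ranking in the sense of differential algebra:
lexicographically in `α`, ties being broken by `j`. -/
abbrev DerivativeIndex (κ ι : Type*) : Type _ := Lex (κ →₀ ℕ) ×ₗ ι

namespace DerivativeIndex

variable {κ ι : Type*}

/-- The index of `θ^α (s j)`. -/
def mk (α : κ →₀ ℕ) (j : ι) : DerivativeIndex κ ι := toLex (toLex α, j)

/-- The multi-index `α` of the derivative `θ^α (s j)`. -/
def exponent (i : DerivativeIndex κ ι) : κ →₀ ℕ := ofLex (ofLex i).1

/-- The index `j` of the term of the family that is differentiated in `θ^α (s j)`. -/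
def base (i : DerivativeIndex κ ι) : ι := (ofLex i).2

/-- The effect on indices of applying the `k`-th derivation. -/
noncomputable def shift (k : κ) (i : DerivativeIndex κ ι) : DerivativeIndex κ ι :=
  mk (i.exponent + Finsupp.single k 1) i.base

theorem mk_exponent_base (i : DerivativeIndex κ ι) : mk i.exponent i.base = i := rfl

theorem shift_mk (k : κ) (α : κ →₀ ℕ) (j : ι) :
    shift k (mk α j) = mk (α + Finsupp.single k 1) j := rfl

variable [LinearOrder κ] [LinearOrder ι]

theorem shift_strictMono (k : κ) : StrictMono (shift k : DerivativeIndex κ ι → _) := by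
  intro i j hij
  refine Prod.Lex.toLex_lt_toLex.mpr ((Prod.Lex.lt_iff.mp hij).imp ?_ ?_)
  · exact fun h ↦ add_lt_add_left h (toLex (Finsupp.single k 1))
  · exact fun h ↦ ⟨congrArg (· + toLex (Finsupp.single k 1)) h.1, h.2⟩

theorem lt_shift (k : κ) (i : DerivativeIndex κ ι) : i < shift k i := by
  have hpos : (0 : κ →₀ ℕ) < Finsupp.single k 1 := by simp [pos_iff_ne_zero]
  have hlex : (0 : Lex (κ →₀ ℕ)) < toLex (Finsupp.single k 1) :=
    Finsupp.toLex_monotone.strictMono_of_injective toLex.injective hpos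
  exact Prod.Lex.lt_iff.mpr (.inl (lt_add_of_pos_right _ hlex))

end DerivativeIndex

open DerivativeIndex

theorem exists_finite_isLeader_mem_precedingField {κ ι K L : Type*} [Finite κ] [LinearOrder κ]
    [Finite ι] [LinearOrder ι] [Field K] [Field L] [Algebra K L] [CharZero L]
    (δ : κ → Derivation ℤ L L)
    (hK : ∀ k (c : K), δ k (algebraMap K L c) ∈ (⊥ : IntermediateField K L))
    {a : DerivativeIndex κ ι → L} (ha : ∀ k i, δ k (a i) = a (shift k i)) :
    ∃ M : Set (DerivativeIndex κ ι), M.Finite ∧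
      ∀ i, IsLeader K a i → i ∉ M → a i ∈ precedingField K a i := by
  have hshift (k : κ) {i : DerivativeIndex κ ι} (hi : IsLeader K a i) :
      a (shift k i) ∈ precedingField K a (shift k i) :=
    hi.mem_precedingField_of_derivation (shift_strictMono k) (lt_shift k) (ha k) (hK k)
  let P (j : ι) (α : κ →₀ ℕ) : Prop := IsLeader K a (mk α j)
  have hP (j : ι) (k : κ) (α : κ →₀ ℕ) (hα : P j α) :
      P j (α + Finsupp.single k 1) := by
    have hmem := hshift k hα
    rw [shift_mk] at hmem
    exact isLeader_of_mem_precedingField hmem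
  refine ⟨⋃ j, (mk · j) '' {α | Minimal (P j) α}, ?_, fun i hi hiM ↦ ?_⟩
  · exact Set.finite_iUnion fun j ↦
      (WellQuasiOrderedLE.finite_of_isAntichain (setOfPred_minimal_antichain (P j))).image _
  · have hmin : ¬ Minimal (P i.base) i.exponent := fun h ↦
      hiM (Set.mem_iUnion.mpr ⟨i.base, i.exponent, h, rfl⟩)
    have hPi : P i.base i.exponent := by rwa [← mk_exponent_base i] at hi
    obtain ⟨k, β, hβ, hiβ⟩ := exists_eq_add_single_of_not_minimal (hP i.base) hPi hmin
    have hmem := hshift k hβ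
    rwa [shift_mk, ← hiβ, mk_exponent_base] at hmem

end Ranking

section FinitelyGenerated

namespace CommutingDerivations

variable {R : Type*} [CommRing R] {m : ℕ} {δ : Fin m → Derivation ℤ R R}

theorem leftCommutative (h : CommutingDerivations δ) : LeftCommutative fun k x ↦ δ k x :=
  ⟨h⟩

/-- The monomial `δ₁^α₁ ⋯ δ_m^α_m` in commuting derivations, as an operator on the ring. -/
noncomputable def monomial (h : CommutingDerivations δ) (α : Fin m →₀ ℕ) (x : R) : R :=
  have := h.leftCommutative
  (Finsupp.toMultiset α).foldr (fun k y ↦ δ k y) x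

theorem monomial_add_single (h : CommutingDerivations δ) (α : Fin m →₀ ℕ) (k : Fin m) (x : R) :
    h.monomial (α + Finsupp.single k 1) x = δ k (h.monomial α x) := by
  have := h.leftCommutative
  simp only [monomial]
  rw [map_add, add_comm, Finsupp.toMultiset_single, one_nsmul, Multiset.singleton_add,
    Multiset.foldr_cons]

theorem exists_monomial_eq_foldr (h : CommutingDerivations δ) (w : List (Fin m)) :
    ∃ α, ∀ x, h.monomial α x = w.foldr (fun k y ↦ δ k y) x := by
  refine ⟨Multiset.toFinsupp (w : Multiset (Fin m)), fun x ↦ ?_⟩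
  simp only [monomial]
  rw [Multiset.toFinsupp_toMultiset, Multiset.coe_foldr]

end CommutingDerivations

open DerivativeIndex

theorem FinitelyDeltaGenerated.exists_algebraicIndependent_finiteDimensional {m : ℕ}
    {K L : Type*} [Field K] [Field L] [CharZero L] [Algebra K L] {δ : Fin m → Derivation ℤ L L}
    (hfg : FinitelyDeltaGenerated K L δ) (hδ : CommutingDerivations δ)
    (hK : ∀ k (c : K), δ k (algebraMap K L c) ∈ (⊥ : IntermediateField K L)) :
    ∃ (ι : Type) (x : ι → L), AlgebraicIndependent K x ∧
      FiniteDimensional (IntermediateField.adjoin K (Set.range x)) L := by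
  obtain ⟨S, hS⟩ := hfg
  let a (i : DerivativeIndex (Fin m) (Fin S.card)) : L :=
    hδ.monomial i.exponent (S.equivFin.symm i.base)
  have ha (k : Fin m) (i) : δ k (a i) = a (shift k i) :=
    (hδ.monomial_add_single i.exponent k _).symm
  have htop : IntermediateField.adjoin K (Set.range a) = ⊤ := by
    rw [eq_top_iff, ← hS]
    refine IntermediateField.adjoin.mono _ _ _ ?_
    rintro _ ⟨s, hs, w, rfl⟩
    obtain ⟨α, hα⟩ := hδ.exists_monomial_eq_foldr w
    refine ⟨mk α (S.equivFin ⟨s, hs⟩), ?_⟩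
    simp [a, mk, exponent, base, hα]
  obtain ⟨M, hM, hmem⟩ := exists_finite_isLeader_mem_precedingField δ hK ha
  refine ⟨{i | ¬ IsLeader K a i}, fun i ↦ a i, algebraicIndependent_not_isLeader a, ?_⟩
  rw [← Set.image_eq_range]
  exact finiteDimensional_adjoin_not_isLeader htop hM hmem

end FinitelyGenerated

theorem tensor_reduced_and_finitely_many_minimalPrimes_general {m : ℕ}
    (K L R : Type*) [Field K] [Field L] [CharZero L] [Algebra K L]
    [CommRing R] [IsDomain R] [Algebra K R]
    (δK : Fin m → Derivation ℤ K K) (δL : Fin m → Derivation ℤ L L)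
    (hcL : CommutingDerivations δL)
    (hcompat : ∀ i a, δL i (algebraMap K L a) = algebraMap K L (δK i a))
    (hfg : FinitelyDeltaGenerated K L δL) :
    IsReduced (L ⊗[K] R) ∧ (minimalPrimes (L ⊗[K] R)).Finite := by
  have hK (i : Fin m) (c : K) : δL i (algebraMap K L c) ∈ (⊥ : IntermediateField K L) :=
    hcompat i c ▸ IntermediateField.algebraMap_mem _ _
  obtain ⟨ι, x, hx, _⟩ := hfg.exists_algebraicIndependent_finiteDimensional hcL hK
  exact isReduced_and_minimalPrimes_finite_tensorProduct_of_algebraicIndependent R hx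

/-- If `L|K` is a finitely `Δ`-generated extension of `Δ`-fields of
characteristic zero, then `L ⊗_K L` is reduced and has only finitely many minimal
prime ideals. -/
theorem tensor_reduced_and_finitely_many_minimalPrimes {m : ℕ}
    (K L : Type*) [Field K] [CharZero K] [Field L] [CharZero L] [Algebra K L]
    (δK : Fin m → Derivation ℤ K K) (δL : Fin m → Derivation ℤ L L)
    (hcK : CommutingDerivations δK) (hcL : CommutingDerivations δL)
    (hcompat : ∀ i a, δL i (algebraMap K L a) = algebraMap K L (δK i a))
    (hfg : FinitelyDeltaGenerated K L δL) :
    IsReduced (L ⊗[K] L) ∧ (minimalPrimes (L ⊗[K] L)).Finite := by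
  exact tensor_reduced_and_finitely_many_minimalPrimes_general K L L δK δL hcL hcompat hfg
end

section
/- Let L|K be an extension of Δ-fields of characteristic zero with K relatively algebraically closed in L. Regard L ⊗_K L as an L-algebra via the first factor, set D := (L ⊗_K L)^Δ and R := {a ∈ L : 1 ⊗ a ∈ (L ⊗ 1)·D}. Suppose b ∈ L satisfies 1 ⊗ b ∈ (L ⊗ 1)D, i.e., u·(1 ⊗ b) = Σ (aᵢ ⊗ 1)dᵢ for some aᵢ ∈ L, dᵢ ∈ D and some u ∈ (L ⊗ 1)·D that is a unit of L ⊗_K L. Then there exists a nonzero a ∈ R with ab ∈ R; in particular b lies in the quotient field of the K-Δ-subalgebra R of L. -/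
open scoped TensorProduct

/-!
Let the perfect field `K` be integrally closed in the fields `L` and `M`, and let `u` be a unit of
`L ⊗[K] M` with inverse `v`. Let `uᵢ` and `vⱼ` be the coordinates of `u` and `v` in a
`K`-basis of `M`.
For a valuation ring `V ⊇ K` of `L` with residue field `k`, the ring `k ⊗[K] M` has no zero
divisors: by Zariski's lemma it suffices to see this with `k` replaced by a finite extension of `K`,
which is linearly disjoint from `M`. Hence Gauss's lemma holds over `V` and yields `uᵢ vⱼ ∈ V`. The
intersection of all such `V` is the integral closure of `K`, so `uᵢ vⱼ ∈ K`, and `u = vⱼ⁻¹ ⊗ a` for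
any `j` with `vⱼ ≠ 0`.

If `u = l ⊗ a` lies in `(L ⊗ 1)·D` and `u (1 ⊗ b) = l ⊗ ab` does too, then multiplication by
`l⁻¹ ⊗ 1` shows that `1 ⊗ a` and `1 ⊗ ab` are in `(L ⊗ 1)·D`.
-/

universe u

section BaseChange

variable {R A S T : Type*} [CommRing R] [Ring A] [Algebra R A] [CommRing S] [Algebra R S]
  [CommRing T] [Algebra R T] {ι : Type*} (e : Module.Basis ι R A)

theorem baseChange_repr_map (φ : S →ₐ[R] T) (x : S ⊗[R] A) (i : ι) :
    (e.baseChange T).repr (Algebra.TensorProduct.map φ (AlgHom.id R A) x) i =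
      φ ((e.baseChange S).repr x i) := by
  induction x with
  | zero => simp
  | tmul s a => simp
  | add x y hx hy => simp only [map_add, Finsupp.add_apply, hx, hy]

theorem exists_baseChange_map_eq {φ : S →ₐ[R] T} {x : T ⊗[R] A}
    (hx : ∀ i, (e.baseChange T).repr x i ∈ φ.range) :
    ∃ y, Algebra.TensorProduct.map φ (AlgHom.id R A) y = x := by
  choose s hs using hx
  refine ⟨∑ i ∈ ((e.baseChange T).repr x).support, s i ⊗ₜ e i, ?_⟩
  conv_rhs => rw [← (e.baseChange T).linearCombination_repr x, Finsupp.linearCombination_apply,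
    Finsupp.sum]
  simp only [map_sum, Algebra.TensorProduct.map_tmul, AlgHom.id_apply,
    Module.Basis.baseChange_apply, TensorProduct.smul_tmul', smul_eq_mul, mul_one]
  exact Finset.sum_congr rfl fun i _ ↦ congrArg (· ⊗ₜ[R] e i) (hs i)

variable {F k : Type*} [Field F] [Algebra R F] [CommRing k] [Nontrivial k] [Algebra R k]

theorem exists_baseChange_map_eq_inv_repr_smul {φ : S →ₐ[R] F} (hφ : Function.Injective φ)
    (ψ : S →ₐ[R] k) {x : F ⊗[R] A} {i : ι}
    (hi : (e.baseChange F).repr x i ≠ 0)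
    (hx : ∀ l, ((e.baseChange F).repr x i)⁻¹ * (e.baseChange F).repr x l ∈ φ.range) :
    ∃ p, Algebra.TensorProduct.map φ (AlgHom.id R A) p = ((e.baseChange F).repr x i)⁻¹ • x ∧
      Algebra.TensorProduct.map ψ (AlgHom.id R A) p ≠ 0 := by
  obtain ⟨p, hp⟩ := exists_baseChange_map_eq e (φ := φ)
    (x := ((e.baseChange F).repr x i)⁻¹ • x) (by simpa using hx)
  have hpi : (e.baseChange S).repr p i = 1 := hφ <| by
    simp only [← baseChange_repr_map, hp, map_smul, Finsupp.smul_apply, smul_eq_mul,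
      inv_mul_cancel₀ hi, map_one]
  refine ⟨p, hp, fun h ↦ ?_⟩
  have := baseChange_repr_map e ψ p i
  simp [h, hpi] at this

-- The common core of Gauss's lemma over a valuation ring and of specialization to finite
-- extensions: a factor scaled to have a coordinate equal to `1` survives every reduction `ψ`.
theorem baseChange_map_ne_zero_of_map_eq_smul_mul [NoZeroDivisors (k ⊗[R] A)]
    {φ : S →ₐ[R] F} (hφ : Function.Injective φ) (ψ : S →ₐ[R] k) {x y : F ⊗[R] A} {i j : ι}
    (hi : (e.baseChange F).repr x i ≠ 0)
    (hx : ∀ l, ((e.baseChange F).repr x i)⁻¹ * (e.baseChange F).repr x l ∈ φ.range)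
    (hj : (e.baseChange F).repr y j ≠ 0)
    (hy : ∀ l, ((e.baseChange F).repr y j)⁻¹ * (e.baseChange F).repr y l ∈ φ.range)
    {z : S ⊗[R] A} (hz : Algebra.TensorProduct.map φ (AlgHom.id R A) z =
      ((e.baseChange F).repr x i * (e.baseChange F).repr y j)⁻¹ • (x * y)) :
    Algebra.TensorProduct.map ψ (AlgHom.id R A) z ≠ 0 := by
  have := Module.Free.of_basis e
  have hinj : Function.Injective (Algebra.TensorProduct.map φ (AlgHom.id R A)) :=
    Module.Flat.rTensor_preserves_injective_linearMap φ.toLinearMap hφ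
  obtain ⟨p, hp, hp₀⟩ := exists_baseChange_map_eq_inv_repr_smul e hφ ψ hi hx
  obtain ⟨q, hq, hq₀⟩ := exists_baseChange_map_eq_inv_repr_smul e hφ ψ hj hy
  obtain rfl : z = p * q := hinj <| by
    rw [hz, map_mul, hp, hq, smul_mul_smul_comm, mul_inv]
  rw [map_mul]
  exact mul_ne_zero hp₀ hq₀

end BaseChange

section GeometricallyIntegral

theorem irreducible_map_of_isIntegrallyClosedIn {R S : Type*} [CommRing R] [CommRing S]
    [IsDomain S] [Algebra R S] [IsIntegrallyClosedIn R S] {f : Polynomial R}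
    (hf : f.Monic) (hirr : Irreducible f) : Irreducible (f.map (algebraMap R S)) := by
  have hinj : Function.Injective (algebraMap R S) := IsIntegralClosure.algebraMap_injective R R S
  have := hinj.isDomain (algebraMap R S)
  have exists_lift {g : Polynomial S} (hg : g.Monic) (hdvd : g ∣ f.map (algebraMap R S)) :
      ∃ g' : Polynomial R, g'.map (algebraMap R S) = g ∧ g'.Monic := by
    have hlifts : g ∈ Polynomial.lifts (algebraMap R S) :=
      (Polynomial.lifts_iff_coeff_lifts g).2 fun n ↦
        IsIntegrallyClosedIn.isIntegral_iff.1 (Polynomial.isIntegral_coeff_of_dvd f g hf hg hdvd n)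
    obtain ⟨g', hmap, -, hmonic⟩ := Polynomial.lifts_and_natDegree_eq_and_monic hlifts hg
    exact ⟨g', hmap, hmonic⟩
  rw [hf.irreducible_iff_natDegree] at hirr
  refine (hf.map _).irreducible_iff_natDegree.2 ⟨?_, fun g h hg hh hgh ↦ ?_⟩
  · rw [← Polynomial.map_one (algebraMap R S)]
    exact (Polynomial.map_injective _ hinj).ne hirr.1
  · obtain ⟨g', rfl, hg'⟩ := exists_lift hg ⟨h, hgh.symm⟩
    obtain ⟨h', rfl, hh'⟩ := exists_lift hh ⟨_, (mul_comm _ h ▸ hgh).symm⟩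
    rw [← Polynomial.map_mul] at hgh
    simpa only [Polynomial.natDegree_map_eq_of_injective hinj] using
      hirr.2 g' h' hg' hh' (Polynomial.map_injective _ hinj hgh)

theorem linearDisjoint_of_isIntegrallyClosedIn {K L N : Type*} [Field K] [Field L] [Field N]
    [Algebra K L] [Algebra K N] [Algebra L N] [IsScalarTower K L N] [IsIntegrallyClosedIn K L]
    (E : IntermediateField K N) [FiniteDimensional K E] [Algebra.IsSeparable K E] :
    E.LinearDisjoint L := by
  let pb := Field.powerBasisOfFiniteOfSeparable K E
  have hmin : (minpoly K pb.gen).map (algebraMap K L) = minpoly L (pb.gen : N) :=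
    minpoly.eq_of_irreducible_of_monic
      (irreducible_map_of_isIntegrallyClosedIn (minpoly.monic pb.isIntegral_gen)
        (minpoly.irreducible pb.isIntegral_gen))
      (by
        rw [Polynomial.aeval_map_algebraMap]
        exact (Polynomial.aeval_algHom_apply E.val pb.gen _).trans
          (by rw [minpoly.aeval, map_zero]))
      ((minpoly.monic pb.isIntegral_gen).map _)
  have hdim : (minpoly L (pb.gen : N)).natDegree = pb.dim := by
    rw [← hmin, Polynomial.natDegree_map, pb.natDegree_minpoly]
  refine .of_basis_left pb.basis ?_
  convert (linearIndependent_pow (K := L) (pb.gen : N)).comp _ (finCongr hdim.symm).injective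
  ext i
  simp

theorem isDomain_tensorProduct_of_isIntegrallyClosedIn (K E L : Type*) [Field K] [Field E]
    [Field L] [Algebra K E] [Algebra K L] [FiniteDimensional K E] [Algebra.IsSeparable K E]
    [IsIntegrallyClosedIn K L] : IsDomain (E ⊗[K] L) := by
  let φ : E →ₐ[K] AlgebraicClosure L := IsAlgClosed.lift
  let ε : E ≃ₐ[K] φ.fieldRange := AlgEquiv.ofInjectiveField φ
  have := Module.Finite.equiv ε.toLinearEquiv
  have := Algebra.IsSeparable.of_algHom K E ε.symm.toAlgHom
  have := (linearDisjoint_of_isIntegrallyClosedIn (L := L) φ.fieldRange).isDomain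
  exact (Algebra.TensorProduct.congr ε AlgEquiv.refl).toMulEquiv.isDomain

theorem noZeroDivisors_tensorProduct_of_finite {K : Type*} [Field K] {A : Type*} [Ring A]
    [Algebra K A]
    (h : ∀ (E : Type u) [Field E] [Algebra K E] [FiniteDimensional K E], NoZeroDivisors (E ⊗[K] A))
    (k : Type u) [Field k] [Algebra K k] : NoZeroDivisors (k ⊗[K] A) := by
  let e := Module.Free.chooseBasis K A
  let c := (e.baseChange k).repr
  refine ⟨fun {x y} hxy ↦ ?_⟩
  by_contra! hne
  obtain ⟨i, hi⟩ := Finsupp.ne_iff.1 (c.map_ne_zero_iff.2 hne.1)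
  obtain ⟨j, hj⟩ := Finsupp.ne_iff.1 (c.map_ne_zero_iff.2 hne.2)
  let G := ((c x i)⁻¹ * ·) '' Set.range (c x) ∪ ((c y j)⁻¹ * ·) '' Set.range (c y)
  have hG : G.Finite := ((c x).finite_range.image _).union ((c y).finite_range.image _)
  let B := Algebra.adjoin K G
  have : Algebra.FiniteType K B :=
    (Subalgebra.fg_iff_finiteType B).1 (Subalgebra.fg_def.2 ⟨G, hG, rfl⟩)
  obtain ⟨m, hm⟩ := Ideal.exists_maximal B
  let := Ideal.Quotient.field m
  have : FiniteDimensional K (B ⧸ m) := finite_of_finite_type_of_isJacobsonRing K (B ⧸ m)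
  have := h (B ⧸ m)
  have mem_range {t : k} (ht : t ∈ G) : t ∈ B.val.range := by
    rw [Subalgebra.range_val]
    exact Algebra.subset_adjoin ht
  exact baseChange_map_ne_zero_of_map_eq_smul_mul e (φ := B.val) (z := 0) Subtype.val_injective
    (Ideal.Quotient.mkₐ K m) hi (fun l ↦ mem_range (.inl ⟨_, ⟨l, rfl⟩, rfl⟩)) hj
    (fun l ↦ mem_range (.inr ⟨_, ⟨l, rfl⟩, rfl⟩)) (by rw [map_zero, hxy, smul_zero]) (map_zero _)

end GeometricallyIntegral

section Units

theorem mem_range_algebraMap_of_forall_mem_valuationSubring {R F : Type*} [CommRing R] [Field F]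
    [Algebra R F] [IsIntegrallyClosedIn R F] {x : F}
    (hx : ∀ V : ValuationSubring F, (∀ r, algebraMap R F r ∈ V) → x ∈ V) :
    x ∈ (algebraMap R F).range := by
  suffices x ∈ (integralClosure R F).toSubring from IsIntegrallyClosedIn.isIntegral_iff.1 this
  rw [Subring.eq_iInf_of_isIntegrallyClosedIn (R := (integralClosure R F).toSubring),
    Subring.mem_iInf]
  exact fun V ↦ hx V fun r ↦ V.2 (algebraMap_mem (integralClosure R F) r)

variable {K : Type*} {F : Type u} {A : Type*} [Field K] [Field F] [Algebra K F] [Ring A]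
  [Algebra K A] {ι : Type*} (e : Module.Basis ι K A)

theorem exists_forall_inv_repr_mul_repr_mem (V : ValuationSubring F) {x : F ⊗[K] A} (hx : x ≠ 0) :
    ∃ i, (e.baseChange F).repr x i ≠ 0 ∧
      ∀ l, ((e.baseChange F).repr x i)⁻¹ * (e.baseChange F).repr x l ∈ V := by
  set c := (e.baseChange F).repr
  obtain ⟨i, hi, hmax⟩ := Finset.exists_max_image (c x).support (fun l ↦ V.valuation (c x l))
    (Finsupp.support_nonempty_iff.2 <| c.map_ne_zero_iff.2 hx)
  refine ⟨i, Finsupp.mem_support_iff.1 hi, fun l ↦ ?_⟩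
  by_cases hl : c x l = 0
  · simp [hl, V.zero_mem]
  · rw [← V.valuation_le_one_iff, map_mul, map_inv₀]
    exact inv_mul_le_one_of_le₀ (hmax l (Finsupp.mem_support_iff.2 hl)) zero_le

theorem repr_mul_repr_mem_of_mul_eq_one (V : ValuationSubring F) [Algebra K V]
    [IsScalarTower K V F] [NoZeroDivisors (IsLocalRing.ResidueField V ⊗[K] A)]
    {u v : F ⊗[K] A} (huv : u * v = 1) (i j : ι) :
    (e.baseChange F).repr u i * (e.baseChange F).repr v j ∈ V := by
  set c := (e.baseChange F).repr
  by_cases hu : u = 0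
  · simp [hu, V.zero_mem]
  by_cases hv : v = 0
  · simp [hv, V.zero_mem]
  obtain ⟨i₀, hi₀, hmem_u⟩ := exists_forall_inv_repr_mul_repr_mem e V hu
  obtain ⟨j₀, hj₀, hmem_v⟩ := exists_forall_inv_repr_mul_repr_mem e V hv
  suffices hmem : c u i₀ * c v j₀ ∈ V by
    have := V.mul_mem _ _ hmem (V.mul_mem _ _ (hmem_u i) (hmem_v j))
    rwa [← mul_mul_mul_comm, mul_inv_cancel_left₀ hi₀, mul_inv_cancel_left₀ hj₀] at this
  by_contra hnot_mem
  let s : V := ⟨_, (V.mem_or_inv_mem _).resolve_left hnot_mem⟩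
  have hs : IsScalarTower.toAlgHom K V (IsLocalRing.ResidueField V) s = 0 := by
    refine (IsLocalRing.residue_eq_zero_iff s).2 ((V.valuation_lt_one_iff s).2 ?_)
    rw [map_inv₀]
    exact inv_lt_one_of_one_lt₀ (lt_of_not_ge fun h ↦ hnot_mem (V.mem_of_valuation_le_one _ h))
  refine baseChange_map_ne_zero_of_map_eq_smul_mul e (φ := IsScalarTower.toAlgHom K V F)
    (z := s ⊗ₜ 1) Subtype.val_injective (IsScalarTower.toAlgHom K V (IsLocalRing.ResidueField V))
    hi₀ (fun l ↦ ⟨⟨_, hmem_u l⟩, rfl⟩) hj₀ (fun l ↦ ⟨⟨_, hmem_v l⟩, rfl⟩) ?_ ?_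
  · rw [huv, Algebra.TensorProduct.one_def, TensorProduct.smul_tmul', smul_eq_mul, mul_one]
    rfl
  · rw [Algebra.TensorProduct.map_tmul, hs, TensorProduct.zero_tmul]

theorem repr_mul_repr_mem_range_of_mul_eq_one [IsIntegrallyClosedIn K F]
    (h : ∀ (k : Type u) [Field k] [Algebra K k], NoZeroDivisors (k ⊗[K] A))
    {u v : F ⊗[K] A} (huv : u * v = 1) (i j : ι) :
    (e.baseChange F).repr u i * (e.baseChange F).repr v j ∈ (algebraMap K F).range := by
  refine mem_range_algebraMap_of_forall_mem_valuationSubring fun V hV ↦ ?_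
  let : Algebra K V := ((algebraMap K F).codRestrict V hV).toAlgebra
  have : IsScalarTower K V F := .of_algebraMap_eq fun _ ↦ rfl
  have := h (IsLocalRing.ResidueField V)
  exact repr_mul_repr_mem_of_mul_eq_one e V huv i j

theorem exists_eq_tmul_of_isUnit [IsIntegrallyClosedIn K F]
    (h : ∀ (k : Type u) [Field k] [Algebra K k], NoZeroDivisors (k ⊗[K] A))
    {u : F ⊗[K] A} (hu : IsUnit u) : ∃ (f : F) (a : A), u = f ⊗ₜ a := by
  obtain ⟨v, huv⟩ := hu.exists_right_inv
  rcases eq_or_ne v 0 with rfl | hv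
  · rw [mul_zero] at huv
    exact ⟨0, 0, by rw [TensorProduct.tmul_zero, ← mul_one u, ← huv, mul_zero]⟩
  let e := Module.Free.chooseBasis K A
  let c := (e.baseChange F).repr
  obtain ⟨j, hj⟩ := Finsupp.ne_iff.1 (c.map_ne_zero_iff.2 hv)
  choose r hr using fun i ↦ repr_mul_repr_mem_range_of_mul_eq_one e h huv i j
  have repr_eq (i) : c u i = r i • (c v j)⁻¹ := by
    rw [Algebra.smul_def, hr, mul_inv_cancel_right₀ hj]
  refine ⟨(c v j)⁻¹, ∑ i ∈ (c u).support, r i • e i, ?_⟩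
  calc u = ∑ i ∈ (c u).support, c u i • e.baseChange F i :=
        ((e.baseChange F).linearCombination_repr u).symm
    _ = ∑ i ∈ (c u).support, (c v j)⁻¹ ⊗ₜ (r i • e i) := by
        simp only [repr_eq, Module.Basis.baseChange_apply, TensorProduct.smul_tmul', smul_eq_mul,
          mul_one, smul_assoc, TensorProduct.tmul_smul]
    _ = _ := (TensorProduct.tmul_sum _ _ _).symm

end Units

theorem mul_mem_dotSet {R : Type*} [CommRing R] {S T : Set R} {s z : R}
    (hs : ∀ t ∈ S, s * t ∈ S) (hz : z ∈ dotSet S T) : s * z ∈ dotSet S T := by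
  obtain ⟨n, σ, τ, hσ, hτ, rfl⟩ := hz
  exact ⟨n, fun i ↦ s * σ i, τ, fun i ↦ hs _ (hσ i), hτ, by simp only [Finset.mul_sum, mul_assoc]⟩

theorem mem_quotientField_of_picardVessiotRing_general {K L M : Type*} [Field K] [PerfectField K]
    [Field L] [Algebra K L] [IsIntegrallyClosedIn K L] [Field M] [Algebra K M]
    [IsIntegrallyClosedIn K M] (D : Set (L ⊗[K] M)) (R : Set M)
    (hR : R = {a : M | (1 : L) ⊗ₜ[K] a ∈ dotSet (Set.range fun l : L => l ⊗ₜ[K] (1 : M)) D})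
    (b : M) (hb : (1 : L) ⊗ₜ[K] b ∈ fracSet (Set.range fun l : L => l ⊗ₜ[K] (1 : M)) D) :
    ∃ a : M, a ≠ 0 ∧ a ∈ R ∧ a * b ∈ R := by
  subst hR
  obtain ⟨r, u, hr, hu, hunit, hbu⟩ := hb
  obtain ⟨l, a, rfl⟩ := exists_eq_tmul_of_isUnit
    (noZeroDivisors_tensorProduct_of_finite fun E _ _ _ ↦
      have := isDomain_tensorProduct_of_isIntegrallyClosedIn K E M
      inferInstance) hunit
  have hl : l ≠ 0 := by rintro rfl; exact hunit.ne_zero (TensorProduct.zero_tmul _ _)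
  have ha : a ≠ 0 := by rintro rfl; exact hunit.ne_zero (TensorProduct.tmul_zero _ _)
  have one_tmul_mem {a : M} (hla : l ⊗ₜ[K] a ∈ dotSet (Set.range fun l : L => l ⊗ₜ[K] (1 : M)) D) :
      (1 : L) ⊗ₜ[K] a ∈ dotSet (Set.range fun l : L => l ⊗ₜ[K] (1 : M)) D := by
    have := mul_mem_dotSet (s := l⁻¹ ⊗ₜ[K] (1 : M))
      (by rintro _ ⟨l', rfl⟩; exact ⟨l⁻¹ * l', by simp⟩) hla
    rwa [Algebra.TensorProduct.tmul_mul_tmul, inv_mul_cancel₀ hl, one_mul] at this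
  refine ⟨a, ha, one_tmul_mem hu, one_tmul_mem ?_⟩
  rwa [← hbu, Algebra.TensorProduct.tmul_mul_tmul, one_mul, mul_comm b] at hr

/-- Let `L|K` be an extension of `Δ`-fields with `K` relatively
algebraically closed in `L`. Set `D := (L ⊗_K L)^Δ` and
`R := {a ∈ L | 1 ⊗ a ∈ (L ⊗ 1)·D}`. If `b ∈ L` satisfies `1 ⊗ b ∈ (L ⊗ 1)D`, then there
is a nonzero `a ∈ R` with `ab ∈ R`; in particular `b` lies in the quotient field of `R`. -/
theorem mem_quotientField_of_picardVessiotRing {m : ℕ}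
    (K L : Type*) [Field K] [CharZero K] [Field L] [CharZero L] [Algebra K L]
    (δK : Fin m → Derivation ℤ K K) (δL : Fin m → Derivation ℤ L L)
    (hcK : CommutingDerivations δK) (hcL : CommutingDerivations δL)
    (hcompat : ∀ i a, δL i (algebraMap K L a) = algebraMap K L (δK i a))
    (hrac : ∀ x : L, IsAlgebraic K x → x ∈ (algebraMap K L).range)
    -- the (unique) `Δ`-ring structure on `L ⊗_K L`:
    (δT : Fin m → Derivation ℤ (L ⊗[K] L) (L ⊗[K] L))
    (hδT : ∀ i (a b : L), δT i (a ⊗ₜ[K] b) = (δL i a) ⊗ₜ[K] b + a ⊗ₜ[K] (δL i b))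
    -- `D := (L ⊗_K L)^Δ` and `R := {a ∈ L | 1 ⊗ a ∈ (L ⊗ 1)·D}`:
    (D : Set (L ⊗[K] L)) (hD : D = {x : L ⊗[K] L | ∀ i, δT i x = 0})
    (R : Set L) (hR : R = {a : L | (1 : L) ⊗ₜ[K] a ∈
      dotSet (Set.range fun l : L => l ⊗ₜ[K] (1 : L)) D})
    (b : L)
    (hb : (1 : L) ⊗ₜ[K] b ∈ fracSet (Set.range fun l : L => l ⊗ₜ[K] (1 : L)) D) :
    ∃ a : L, a ≠ 0 ∧ a ∈ R ∧ a * b ∈ R := by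
  have : IsIntegrallyClosedIn K L := isIntegrallyClosedIn_iff.2
    ⟨(algebraMap K L).injective, fun {x} hx ↦ hrac x hx.isAlgebraic⟩
  exact mem_quotientField_of_picardVessiotRing_general D R hR b hb
end
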